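/- arXiv:2512.14342 — 3 statements merged into one kernel-verified Lean document; each statement's English description precedes it below -/
import Mathlib

section
/- (Mass Transference Principle under full measure; dimension form.) In the product Ahlfors-regular setting described in the context, let (B_{i,n}) be balls in Y_i with radii r(B_{i,n}) = r_n^{v_{i,n}}, where r_n → 0 and v_{i,n} → v_i ∈ ℝ⁺∪{+∞}, and let u_{i,n} ≤ v_{i,n} with u_{i,n} → u_i ∈ ℝ⁺; set s_{i,n} := u_{i,n}δ_i/v_{i,n}. Let (f_n : Y → X) be a sequence of ε₀-local isometries with a common constant ε₀ > 0 satisfying condition (H): there is a sequence (c_n) ⊆ [1,∞) with (log c_n)/(−log r_n) → 0 and an ε₀-local isometry f : Y → X such that for every n and every rectangle R = Π_{i=1}^d B(x_i,r_i) ⊆ Y of diameter < ε₀ there exist points y_{R,i,n} ∈ Y_i with f(Π_i B(y_{R,i,n}, c_n^{-1} r_i)) ⊆ f_n(R) ⊆ f(Π_i B(y_{R,i,n}, c_n r_i)). Assume the full measure condition μ( limsup_n f_n(Π_{i=1}^d B_{i,n}^{s_{i,n}}) ) = μ(X). Then dim_H ( limsup_n f_n(Π_{i=1}^d B_{i,n})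 ) ≥ s(u,v). -/
open Filter MeasureTheory Set
open scoped ENNReal NNReal

noncomputable section

variable {d : ℕ}

/-- The `ℓ²` distance on a finite product of metric spaces. -/
def dist2 {E : Fin d → Type*} [∀ i, MetricSpace (E i)] (x y : ∀ i, E i) : ℝ :=
  Real.sqrt (∑ i, dist (x i) (y i) ^ 2)

/-- The open ball for the `ℓ²` distance on a finite product of metric spaces. -/
def ball2 {E : Fin d → Type*} [∀ i, MetricSpace (E i)] (c : ∀ i, E i) (r : ℝ) :
    Set (∀ i, E i) :=
  {x | dist2 x c < r}

/-- `f : Y → X` is an `ε₀`-local isometry: around every point it maps the `ε₀`-ball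
bijectively onto the `ε₀`-ball around the image, preserving the (product `ℓ²`) distance. -/
def IsLocalIsometry {Y X : Fin d → Type*} [∀ i, MetricSpace (Y i)] [∀ i, MetricSpace (X i)]
    (f : (∀ i, Y i) → (∀ i, X i)) (ε₀ : ℝ) : Prop :=
  ∀ y : ∀ i, Y i, Set.BijOn f (ball2 y ε₀) (ball2 (f y) ε₀) ∧
    ∀ x ∈ ball2 y ε₀, dist2 (f x) (f y) = dist2 x y

/-- The measure `μ_i` is `δ`-Ahlfors regular. -/
def IsAhlfors {Z : Type*} [MetricSpace Z] [MeasurableSpace Z] (μ : Measure Z) (δ : ℝ) : Prop :=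
  ∃ c₁ c₂ r₀ : ℝ, 0 < c₁ ∧ c₁ ≤ 1 ∧ 1 ≤ c₂ ∧ 0 < r₀ ∧
    ∀ (z : Z) (r : ℝ), 0 < r → r ≤ r₀ →
      ENNReal.ofReal (c₁ * r ^ δ) ≤ μ (Metric.ball z r) ∧
        μ (Metric.ball z r) ≤ ENNReal.ofReal (c₂ * r ^ δ)

/-- The dimensional number `s(u,v,i)`, for `v i` possibly infinite. -/
def dimNumI (δ u : Fin d → ℝ) (v : Fin d → ℝ≥0∞) (i : Fin d) : ℝ :=
  if v i = ⊤ then ∑ k ∈ Finset.univ.filter (fun k => v k ≠ ⊤), δ k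
  else (∑ k ∈ Finset.univ.filter (fun k => (v i).toReal < u k), δ k)
    + (∑ k ∈ Finset.univ.filter (fun k => v k ≤ v i),
        δ k * (1 - ((v k).toReal - u k) / (v i).toReal))
    + ∑ k ∈ Finset.univ.filter (fun k => ¬((v i).toReal < u k) ∧ ¬(v k ≤ v i)),
        δ k * u k / (v i).toReal

/-- The dimensional number `s(u,v) = min_{1≤i≤d} s(u,v,i)`. -/
def dimNum (δ u : Fin d → ℝ) (v : Fin d → ℝ≥0∞) : ℝ := ⨅ i, dimNumI δ u v i


/-- The diameter of a set for the product `ℓ²` distance. -/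
def diam2 {E : Fin d → Type*} [∀ i, MetricSpace (E i)] (S : Set (∀ i, E i)) : ℝ :=
  sSup {t : ℝ | ∃ x ∈ S, ∃ y ∈ S, t = dist2 x y}

/-!
A ball of radius `r ^ A` meets a chart rectangle with sides `r ^ a k`, a rectangle with sides
`r ^ u k` inside it and a rectangle with sides `r ^ v k` inside that one in sets whose measures are
products of powers of `r`. Moving the mass of the chart rectangle onto the innermost rectangle
therefore produces a measure whose exponent on that ball is a sum over `k` of concave piecewise
linear functions of `A`. By concavity only the breakpoints `A = v i` matter, and they are the
competitors in the minimum `s(u, v)`.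

Condition (H) places the outer rectangles in images under the single map `g` of rectangles with the
fixed exponents `ulim k - e`. These are comparable to one another, so the Vitali covering argument
shows that they fill a fixed proportion of every open set, although they are not balls. Iterating
the redistribution of mass inside the inner rectangles gives a measure carried by the limsup set,
with Frostman exponent as close to `s(u, v)` as desired.
-/

/-- `IsPacking R G N J`: the sets `R n` with `n ∈ J` are disjoint subsets of `G`, and all the
indices in `J` are at least `N`. -/
structure IsPacking {Z : Type*} (R : ℕ → Set Z) (G : Set Z) (N : ℕ) (J : Finset ℕ) : Prop where
  le : ∀ n ∈ J, N ≤ n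
  subset : ∀ n ∈ J, R n ⊆ G
  disjoint : (J : Set ℕ).PairwiseDisjoint R

/-- `FillsProportion m R c`: in every open set the `R n`, even with large `n` only, have a finite
packing which fills the proportion `c` of its measure. -/
def FillsProportion {Z : Type*} [TopologicalSpace Z] [MeasurableSpace Z] (m : Measure Z)
    (R : ℕ → Set Z) (c : ℝ≥0∞) : Prop :=
  ∀ G : Set Z, IsOpen G → ∀ N, ∃ J, IsPacking R G N J ∧ c * m G ≤ m (⋃ n ∈ J, R n)

theorem IsPacking.union {Z : Type*} {R : ℕ → Set Z} {G : Set Z} {N : ℕ} {J J' : Finset ℕ}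
    (hJ : IsPacking R G N J) (hJ' : IsPacking R (G \ ⋃ n ∈ J, R n) N J') :
    IsPacking R G N (J ∪ J') where
  le n hn := (Finset.mem_union.1 hn).elim (hJ.le n) (hJ'.le n)
  subset n hn := (Finset.mem_union.1 hn).elim (hJ.subset n)
    fun h => (hJ'.subset n h).trans sdiff_subset
  disjoint := by
    rw [Finset.coe_union, pairwiseDisjoint_union]
    refine ⟨hJ.disjoint, hJ'.disjoint, fun a ha b hb _ => ?_⟩
    exact (disjoint_sdiff_left.mono_left (hJ'.subset b hb)).symm.mono_left
      (subset_biUnion_of_mem (u := R) ha)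

theorem FillsProportion.exists_isPacking_measure_sdiff_le {Z : Type*} [TopologicalSpace Z]
    [MeasurableSpace Z] [OpensMeasurableSpace Z] {m : Measure Z} [IsFiniteMeasure m]
    {R : ℕ → Set Z} (hR : ∀ n, IsClosed (R n)) {c : ℝ≥0∞} (hc : 0 < c)
    (hfill : FillsProportion m R c) {G : Set Z} (hG : IsOpen G) (N : ℕ) {ε : ℝ≥0∞} (hε : 0 < ε) :
    ∃ J, IsPacking R G N J ∧ m (G \ ⋃ n ∈ J, R n) ≤ ε := by
  classical
  have iterate (k : ℕ) : ∃ J, IsPacking R G N J ∧ m (G \ ⋃ n ∈ J, R n) ≤ (1 - c) ^ k * m G := by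
    induction k with
    | zero => exact ⟨∅, ⟨by simp, by simp, by simp⟩, by simp⟩
    | succ k ih =>
      obtain ⟨J, hJ, hJm⟩ := ih
      have hclosed (I : Finset ℕ) : IsClosed (⋃ n ∈ I, R n) :=
        isClosed_biUnion_finset fun n _ => hR n
      obtain ⟨J', hJ', hJm'⟩ := hfill _ (hG.sdiff (hclosed J)) N
      refine ⟨J ∪ J', hJ.union hJ', ?_⟩
      rw [Finset.set_biUnion_union, ← sdiff_sdiff, measure_sdiff (iUnion₂_subset hJ'.subset)
        (hclosed J').measurableSet.nullMeasurableSet (measure_ne_top _ _)]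
      calc m (G \ ⋃ n ∈ J, R n) - m (⋃ n ∈ J', R n)
          ≤ m (G \ ⋃ n ∈ J, R n) - c * m (G \ ⋃ n ∈ J, R n) := tsub_le_tsub_left hJm' _
        _ = (1 - c) * m (G \ ⋃ n ∈ J, R n) := by
            rw [ENNReal.sub_mul (fun _ _ => measure_ne_top _ _), one_mul]
        _ ≤ (1 - c) * ((1 - c) ^ k * m G) := by gcongr
        _ = (1 - c) ^ (k + 1) * m G := by rw [pow_succ', mul_assoc]
  have hlim : Tendsto (fun k : ℕ => (1 - c) ^ k * m G) atTop (nhds 0) := by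
    simpa only [zero_mul] using ENNReal.Tendsto.mul_const
      (ENNReal.tendsto_pow_atTop_nhds_zero_of_lt_one
        (ENNReal.sub_lt_self ENNReal.one_ne_top one_ne_zero hc.ne'))
      (Or.inr (measure_ne_top m G))
  obtain ⟨k, hk⟩ := (hlim.eventually_lt_const hε).exists
  obtain ⟨J, hJ, hJm⟩ := iterate k
  exact ⟨J, hJ, hJm.trans hk.le⟩

/-- The Frostman condition with exponent `t` and constant `b`. -/
def IsFrostman {Z : Type*} [MetricSpace Z] [MeasurableSpace Z] (θ : Measure Z) (t b : ℝ) : Prop :=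
  ∀ x ρ, 0 < ρ → θ (Metric.ball x ρ) ≤ ENNReal.ofReal (b * ρ ^ t)

theorem IsFrostman.measure_le_ediam_rpow {Z : Type*} [MetricSpace Z] [MeasurableSpace Z]
    {θ : Measure Z} {t b : ℝ} (hθ : IsFrostman θ t b) (ht : 0 < t) {S : Set Z}
    (hS : Bornology.IsBounded S) : θ S ≤ ENNReal.ofReal b * Metric.ediam S ^ t := by
  obtain rfl | ⟨p, hp⟩ := S.eq_empty_or_nonempty
  · simp
  have hball (e : ℝ) (he : 0 < e) : θ S ≤ ENNReal.ofReal (b * (Metric.diam S + e) ^ t) :=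
    (measure_mono fun q hq => Metric.mem_ball.2
      ((Metric.dist_le_diam_of_mem hS hq hp).trans_lt (lt_add_of_pos_right _ he))).trans
      (hθ p _ (add_pos_of_nonneg_of_pos Metric.diam_nonneg he))
  have hlim : Tendsto (fun e : ℝ => ENNReal.ofReal (b * (Metric.diam S + e) ^ t))
      (nhdsWithin 0 (Ioi 0)) (nhds (ENNReal.ofReal (b * (Metric.diam S + 0) ^ t))) :=
    (ENNReal.tendsto_ofReal (((tendsto_const_nhds.add tendsto_id).rpow_const
      (Or.inr ht.le)).const_mul b)).mono_left nhdsWithin_le_nhds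
  refine (ge_of_tendsto hlim (eventually_nhdsWithin_of_forall hball)).trans_eq ?_
  rw [add_zero, ENNReal.ofReal_mul' (Real.rpow_nonneg Metric.diam_nonneg t),
    ← ENNReal.ofReal_rpow_of_nonneg Metric.diam_nonneg ht.le, Metric.diam,
    ENNReal.ofReal_toReal hS.ediam_ne_top]

theorem exists_pos_ediam_thickening_rpow_le {Z : Type*} [PseudoEMetricSpace Z] {T : Set Z}
    (hT : Metric.ediam T ≠ ∞) {t : ℝ} (ht : 0 < t) {ε : ℝ≥0∞} (hε : 0 < ε) :
    ∃ e > 0, Metric.ediam (Metric.thickening e T) ^ t ≤ Metric.ediam T ^ t + ε := by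
  have hlim : Tendsto (fun e : ℝ => (Metric.ediam T + 2 * ENNReal.ofReal e) ^ t)
      (nhdsWithin 0 (Ioi 0)) (nhds ((Metric.ediam T + 2 * ENNReal.ofReal 0) ^ t)) :=
    ((tendsto_const_nhds.add (ENNReal.Tendsto.const_mul (ENNReal.tendsto_ofReal tendsto_id)
      (Or.inr ENNReal.ofNat_ne_top))).ennrpow_const t).mono_left nhdsWithin_le_nhds
  rw [ENNReal.ofReal_zero, mul_zero, add_zero] at hlim
  have hlt := ENNReal.lt_add_right (ENNReal.rpow_ne_top_of_nonneg ht.le hT) hε.ne'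
  obtain ⟨e, he, he0⟩ := ((hlim.eventually_lt_const hlt).and self_mem_nhdsWithin).exists
  refine ⟨e, he0, le_trans ?_ he.le⟩
  gcongr
  exact (congrArg (fun e => Metric.ediam (Metric.thickening e T))
    (Real.coe_toNNReal e (le_of_lt he0))).ge.trans (Metric.ediam_thickening_le e.toNNReal)

theorem exists_isOpen_cover_of_hausdorffMeasure_eq_zero {Z : Type*} [EMetricSpace Z]
    [MeasurableSpace Z] [BorelSpace Z] {t : ℝ} (ht : 0 < t) {F : Set Z} (hF : μH[t] F = 0)
    {ε : ℝ≥0∞} (hε : 0 < ε) :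
    ∃ O : ℕ → Set Z, (∀ j, IsOpen (O j)) ∧ F ⊆ ⋃ j, O j ∧ ∑' j, Metric.ediam (O j) ^ t ≤ ε := by
  have hε2 : 0 < ε / 2 := ENNReal.half_pos hε.ne'
  have hpre : ∃ T : ℕ → Set Z, F ⊆ ⋃ j, T j ∧ (∀ j, Metric.ediam (T j) ≤ 1) ∧
      ∑' j, ⨆ _ : (T j).Nonempty, Metric.ediam (T j) ^ t < ε / 2 := by
    rw [Measure.hausdorffMeasure_apply] at hF
    simpa only [iInf_lt_iff, exists_prop] using
      (ENNReal.iSup_eq_zero.1 (ENNReal.iSup_eq_zero.1 hF 1) one_pos).trans_lt hε2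
  obtain ⟨T, hcover, hdiam, hsum⟩ := hpre
  obtain ⟨ε', hε'0, hε'⟩ := ENNReal.exists_pos_sum_of_countable' hε2.ne' ℕ
  choose e he0 he using fun j => exists_pos_ediam_thickening_rpow_le
    (ne_top_of_le_ne_top ENNReal.one_ne_top (hdiam j)) ht (hε'0 j)
  refine ⟨fun j => Metric.thickening (e j) (T j), fun j => Metric.isOpen_thickening,
    hcover.trans (iUnion_mono fun j => Metric.self_subset_thickening (he0 j) _), ?_⟩
  have hterm (j : ℕ) : Metric.ediam (Metric.thickening (e j) (T j)) ^ t ≤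
      (⨆ _ : (T j).Nonempty, Metric.ediam (T j) ^ t) + ε' j := by
    obtain h | h := (T j).eq_empty_or_nonempty
    · simp [h, Metric.thickening_empty, ENNReal.zero_rpow_of_pos ht]
    · rw [iSup_pos h]
      exact he j
  calc ∑' j, Metric.ediam (Metric.thickening (e j) (T j)) ^ t
      ≤ ∑' j, ((⨆ _ : (T j).Nonempty, Metric.ediam (T j) ^ t) + ε' j) :=
        ENNReal.tsum_le_tsum hterm
    _ = (∑' j, ⨆ _ : (T j).Nonempty, Metric.ediam (T j) ^ t) + ∑' j, ε' j := ENNReal.tsum_add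
    _ ≤ ε / 2 + ε / 2 := by gcongr
    _ = ε := ENNReal.add_halves ε

theorem hausdorffMeasure_iInter_ne_zero {Z : Type*} [MetricSpace Z] [CompactSpace Z]
    [MeasurableSpace Z] [BorelSpace Z] {F : ℕ → Set Z} (hF : ∀ k, IsClosed (F k))
    (hanti : Antitone F) {θ : ℕ → Measure Z} {a : ℝ≥0∞} (ha : 0 < a)
    (hmass : ∀ k, a ≤ θ k (F k)) {t b : ℝ} (ht : 0 < t) (hθ : ∀ k, IsFrostman (θ k) t b) :
    μH[t] (⋂ k, F k) ≠ 0 := by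
  intro hzero
  obtain ⟨ε, hε0, hε⟩ : ∃ ε > 0, ENNReal.ofReal b * ε < a := by
    obtain ⟨ε, hε0, hε⟩ := ENNReal.exists_nnreal_pos_mul_lt ENNReal.ofReal_ne_top ha.ne'
    exact ⟨ε, ENNReal.coe_pos.2 hε0, by rwa [mul_comm]⟩
  obtain ⟨O, hO, hcover, hsum⟩ := exists_isOpen_cover_of_hausdorffMeasure_eq_zero ht hzero hε0
  obtain ⟨k, hk⟩ := exists_subset_nhds_of_isCompact' hanti.directed_ge (fun k => (hF k).isCompact)
    hF fun x hx => (isOpen_iUnion hO).mem_nhds (hcover hx)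
  refine hε.not_ge ?_
  calc a ≤ θ k (F k) := hmass k
    _ ≤ ∑' j, θ k (O j) := (measure_mono hk).trans (measure_iUnion_le _)
    _ ≤ ∑' j, ENNReal.ofReal b * Metric.ediam (O j) ^ t :=
        ENNReal.tsum_le_tsum fun j =>
          (hθ k).measure_le_ediam_rpow ht (Bornology.IsBounded.all _)
    _ = ENNReal.ofReal b * ∑' j, Metric.ediam (O j) ^ t := ENNReal.tsum_mul_left
    _ ≤ ENNReal.ofReal b * ε := by gcongr

/-- The measure obtained from `θ` by spreading, for each `n ∈ J`, the mass of `R n` uniformly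
(with respect to `m`) over `P n`. -/
def redistribute {Z ι : Type*} [MeasurableSpace Z] (m θ : Measure Z) (R P : ι → Set Z)
    (J : Finset ι) : Measure Z :=
  ∑ n ∈ J, (θ (R n) / m (P n)) • m.restrict (P n)

section Redistribute

variable {Z ι : Type*} [MeasurableSpace Z] {m θ : Measure Z} {R P : ι → Set Z} {J : Finset ι}

theorem redistribute_apply (m θ : Measure Z) (R P : ι → Set Z) (J : Finset ι)
    {S : Set Z} (hS : MeasurableSet S) :
    redistribute m θ R P J S = ∑ n ∈ J, θ (R n) / m (P n) * m (S ∩ P n) := by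
  simp [redistribute, Measure.restrict_apply hS]

theorem redistribute_compl_biUnion (m θ : Measure Z) (R : ι → Set Z)
    (hP : ∀ n ∈ J, MeasurableSet (P n)) : redistribute m θ R P J (⋃ n ∈ J, P n)ᶜ = 0 := by
  rw [redistribute_apply _ _ _ _ _ (J.measurableSet_biUnion hP).compl]
  refine Finset.sum_eq_zero fun n hn => ?_
  rw [(disjoint_compl_left.mono_right (Finset.subset_set_biUnion_of_mem hn)).inter_eq,
    measure_empty, mul_zero]

theorem redistribute_univ (θ : Measure Z)
    (hR : ∀ n ∈ J, MeasurableSet (R n)) (hdisj : (J : Set ι).PairwiseDisjoint R)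
    (hP0 : ∀ n ∈ J, m (P n) ≠ 0) (hPtop : ∀ n ∈ J, m (P n) ≠ ∞) :
    redistribute m θ R P J univ = θ (⋃ n ∈ J, R n) := by
  rw [redistribute_apply _ _ _ _ _ MeasurableSet.univ, measure_biUnion_finset hdisj hR]
  refine Finset.sum_congr rfl fun n hn => ?_
  rw [univ_inter, ENNReal.div_mul_cancel (hP0 n hn) (hPtop n hn)]

theorem exists_redistribute_le_smul [IsFiniteMeasure θ]
    (hP0 : ∀ n ∈ J, m (P n) ≠ 0) : ∃ M : ℝ≥0, redistribute m θ R P J ≤ M • m := by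
  refine ⟨∑ n ∈ J, (θ (R n) / m (P n)).toNNReal, ?_⟩
  rw [redistribute, Finset.sum_smul]
  refine Finset.sum_le_sum fun n hn S => ?_
  rw [Measure.smul_apply, Measure.smul_apply, smul_eq_mul, ENNReal.smul_def, smul_eq_mul,
    ENNReal.coe_toNNReal (ENNReal.div_ne_top (measure_ne_top θ _) (hP0 n hn))]
  gcongr
  exact Measure.restrict_le_self

variable [MetricSpace Z] [BorelSpace Z]

theorem redistribute_ball_le (m θ : Measure Z) (hR : ∀ n ∈ J, MeasurableSet (R n))
    (hPR : ∀ n ∈ J, P n ⊆ R n) (hdisj : (J : Set ι).PairwiseDisjoint R) {η : ℝ}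
    (hdiam : ∀ n ∈ J, ∀ x ∈ R n, ∀ y ∈ R n, dist x y ≤ η) (x : Z) (ρ : ℝ) :
    redistribute m θ R P J (Metric.ball x ρ) ≤ θ (Metric.ball x (ρ + η)) := by
  rw [redistribute_apply _ _ _ _ _ measurableSet_ball]
  calc ∑ n ∈ J, θ (R n) / m (P n) * m (Metric.ball x ρ ∩ P n)
      ≤ ∑ n ∈ J, θ (R n ∩ Metric.ball x (ρ + η)) := by
        refine Finset.sum_le_sum fun n hn => ?_
        obtain hempty | ⟨p, hpx, hpP⟩ := (Metric.ball x ρ ∩ P n).eq_empty_or_nonempty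
        · simp [hempty]
        have hsub : R n ⊆ Metric.ball x (ρ + η) := fun y hy => Metric.mem_ball.2 <| by
          linarith [hdiam n hn y hy p (hPR n hn hpP), dist_triangle y p x, Metric.mem_ball.1 hpx]
        calc θ (R n) / m (P n) * m (Metric.ball x ρ ∩ P n)
            ≤ θ (R n) / m (P n) * m (P n) := by gcongr; exact inter_subset_right
          _ ≤ θ (R n) := ENNReal.mul_le_of_le_div le_rfl
          _ = θ (R n ∩ Metric.ball x (ρ + η)) := by rw [inter_eq_left.2 hsub]
    _ = θ (⋃ n ∈ J, R n ∩ Metric.ball x (ρ + η)) :=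
        (measure_biUnion_finset (hdisj.mono fun n => inter_subset_left)
          fun n hn => (hR n hn).inter measurableSet_ball).symm
    _ ≤ θ (Metric.ball x (ρ + η)) := measure_mono (iUnion₂_subset fun n _ => inter_subset_right)

theorem redistribute_ball_le_of_spread {M : ℝ≥0} {K : ℝ≥0∞} (hθ : θ ≤ M • m)
    (hR : ∀ n ∈ J, MeasurableSet (R n)) (hP0 : ∀ n ∈ J, m (P n) ≠ 0)
    (hPtop : ∀ n ∈ J, m (P n) ≠ ∞) (hdisj : (J : Set ι).PairwiseDisjoint R) {x : Z} {ρ : ℝ}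
    (hspread : ∀ n ∈ J, m (R n) * m (Metric.ball x ρ ∩ P n) ≤
      K * m (P n) * m (R n ∩ Metric.ball x (2 * ρ))) :
    redistribute m θ R P J (Metric.ball x ρ) ≤ M * K * m (Metric.ball x (2 * ρ)) := by
  rw [redistribute_apply _ _ _ _ _ measurableSet_ball]
  calc ∑ n ∈ J, θ (R n) / m (P n) * m (Metric.ball x ρ ∩ P n)
      ≤ ∑ n ∈ J, M * K * m (R n ∩ Metric.ball x (2 * ρ)) := by
        refine Finset.sum_le_sum fun n hn => ?_
        calc θ (R n) / m (P n) * m (Metric.ball x ρ ∩ P n)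
            ≤ (M * m (R n)) / m (P n) * m (Metric.ball x ρ ∩ P n) := by
              gcongr
              exact hθ (R n)
          _ = M * (m (R n) * m (Metric.ball x ρ ∩ P n)) * (m (P n))⁻¹ := by
              rw [div_eq_mul_inv]; ring
          _ ≤ M * (K * m (P n) * m (R n ∩ Metric.ball x (2 * ρ))) * (m (P n))⁻¹ := by
              gcongr M * ?_ * _
              exact hspread n hn
          _ = M * K * m (R n ∩ Metric.ball x (2 * ρ)) * (m (P n) * (m (P n))⁻¹) := by ring
          _ = M * K * m (R n ∩ Metric.ball x (2 * ρ)) := by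
              rw [ENNReal.mul_inv_cancel (hP0 n hn) (hPtop n hn), mul_one]
    _ = M * K * m (⋃ n ∈ J, R n ∩ Metric.ball x (2 * ρ)) := by
        rw [← Finset.mul_sum, measure_biUnion_finset (hdisj.mono fun n => inter_subset_left)
          fun n hn => (hR n hn).inter measurableSet_ball]
    _ ≤ M * K * m (Metric.ball x (2 * ρ)) := by
        gcongr
        exact iUnion₂_subset fun n _ => inter_subset_right

end Redistribute

/-- Closed sets `R n` and open subsets `P n` for the mass transference from `R n` to `P n`: the
`R n` fill a fixed proportion of every open set, while `P n` is spread out inside `R n` in an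
`s`-dimensional way. The measure `m` is `D`-dimensional, and `E n` is the set in which the
closure of `P n` is required to lie. -/
structure IsTransferSystem {Z : Type*} [MetricSpace Z] [MeasurableSpace Z] (m : Measure Z)
    (R P E : ℕ → Set Z) (s D C : ℝ) (c : ℝ≥0∞) : Prop where
  isClosed : ∀ n, IsClosed (R n)
  isOpen : ∀ n, IsOpen (P n)
  subset : ∀ n, P n ⊆ R n
  closure_subset : ∀ n, closure (P n) ⊆ E n
  measure_ne_zero : ∀ n, m (P n) ≠ 0
  dist_le : ∀ η > 0, ∀ᶠ n in atTop, ∀ x ∈ R n, ∀ y ∈ R n, dist x y ≤ η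
  pos_const : 0 < C
  isFrostman : IsFrostman m D C
  spread : ∀ n x ρ, 0 < ρ → ρ ≤ 1 → m (R n) * m (Metric.ball x ρ ∩ P n) ≤
    ENNReal.ofReal (C * ρ ^ (s - D)) * m (P n) * m (R n ∩ Metric.ball x (2 * ρ))
  pos_filling : 0 < c
  filling : FillsProportion m R c

theorem exists_pos_mul_rpow_le (Q : ℝ) {e b : ℝ} (he : 0 < e) (hb : 0 < b) :
    ∃ ρ₁ : ℝ, 0 < ρ₁ ∧ ρ₁ ≤ 1 ∧ ∀ ρ, 0 < ρ → ρ ≤ ρ₁ → Q * ρ ^ e ≤ b := by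
  have hlim : Tendsto (fun ρ : ℝ => Q * ρ ^ e) (nhds 0) (nhds (Q * 0 ^ e)) :=
    (tendsto_id.rpow_const (Or.inr he.le)).const_mul Q
  rw [Real.zero_rpow he.ne', mul_zero] at hlim
  obtain ⟨ρ₁, hρ₁, h⟩ := Metric.eventually_nhds_iff.1 (hlim.eventually_lt_const hb)
  refine ⟨min (ρ₁ / 2) 1, by positivity, min_le_right _ _, fun ρ hρ hle => (h ?_).le⟩
  rw [Real.dist_0_eq_abs, abs_of_pos hρ]
  linarith [hle.trans (min_le_left _ _)]

theorem exists_pos_forall_mul_add_rpow_le {t b b' ρ₁ : ℝ} (ht : 0 < t) (hb : 0 ≤ b)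
    (hbb' : b < b') (hρ₁ : 0 < ρ₁) :
    ∃ η > 0, ∀ ρ ≥ ρ₁, b * (ρ + η) ^ t ≤ b' * ρ ^ t := by
  have hlim : Tendsto (fun η : ℝ => b * (1 + η / ρ₁) ^ t) (nhdsWithin 0 (Ioi 0))
      (nhds (b * (1 + 0 / ρ₁) ^ t)) :=
    (((tendsto_const_nhds.add (tendsto_id.div_const ρ₁)).rpow_const
      (Or.inr ht.le)).const_mul b).mono_left nhdsWithin_le_nhds
  rw [zero_div, add_zero, Real.one_rpow, mul_one] at hlim
  obtain ⟨η, hη, hη0 : 0 < η⟩ := ((hlim.eventually_lt_const hbb').and self_mem_nhdsWithin).exists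
  refine ⟨η, hη0, fun ρ hρ => ?_⟩
  have hρ0 : 0 < ρ := hρ₁.trans_le hρ
  have hadd : ρ + η ≤ (1 + η / ρ₁) * ρ := by
    rw [add_mul, one_mul, div_mul_eq_mul_div]
    gcongr
    rw [le_div_iff₀ hρ₁]
    gcongr
  calc b * (ρ + η) ^ t ≤ b * ((1 + η / ρ₁) * ρ) ^ t := by gcongr
    _ = b * (1 + η / ρ₁) ^ t * ρ ^ t := by rw [Real.mul_rpow (by positivity) hρ0.le, mul_assoc]
    _ ≤ b' * ρ ^ t := by gcongr

theorem IsFrostman.mono_const {Z : Type*} [MetricSpace Z] [MeasurableSpace Z] {θ : Measure Z}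
    {t b b' : ℝ} (hθ : IsFrostman θ t b) (hb : b ≤ b') : IsFrostman θ t b' := fun x ρ hρ =>
  (hθ x ρ hρ).trans (ENNReal.ofReal_le_ofReal (by gcongr))

theorem IsFrostman.mono_exponent {Z : Type*} [MetricSpace Z] [MeasurableSpace Z] {θ : Measure Z}
    [IsFiniteMeasure θ] {D C t : ℝ} (hθ : IsFrostman θ D C) (hC : 0 ≤ C) (ht : 0 ≤ t)
    (htD : t ≤ D) : IsFrostman θ t (C + θ.real univ) := by
  intro x ρ hρ
  have hθ0 : 0 ≤ θ.real univ := measureReal_nonneg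
  obtain hρ1 | hρ1 := le_or_gt ρ 1
  · refine (hθ x ρ hρ).trans (ENNReal.ofReal_le_ofReal ?_)
    have hpow := Real.rpow_le_rpow_of_exponent_ge hρ hρ1 htD
    gcongr
    exact le_add_of_nonneg_right hθ0
  · calc θ (Metric.ball x ρ) ≤ θ univ := measure_mono (subset_univ _)
      _ = ENNReal.ofReal (θ.real univ) := by rw [ofReal_measureReal]
      _ ≤ ENNReal.ofReal ((C + θ.real univ) * ρ ^ t) := ENNReal.ofReal_le_ofReal
          ((le_add_of_nonneg_left hC).trans
            (le_mul_of_one_le_right (by positivity) (Real.one_le_rpow hρ1.le ht)))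

theorem measure_univ_le_add_of_measure_sdiff_le {Z : Type*} [MeasurableSpace Z]
    {m θ : Measure Z} {M : ℝ≥0} (hM : θ ≤ M • m) {G U : Set Z} (hG : θ Gᶜ = 0) {ε : ℝ≥0∞}
    (hε : m (G \ U) ≤ ε) : θ univ ≤ θ U + M * ε :=
  calc θ univ ≤ θ (U ∪ (G \ U) ∪ Gᶜ) := measure_mono fun x _ => by
        by_cases hx : x ∈ G <;> by_cases hx' : x ∈ U <;> simp [hx, hx']
    _ ≤ θ U + θ (G \ U) + θ Gᶜ :=
        (measure_union_le _ _).trans (by gcongr; exact measure_union_le _ _)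
    _ = θ U + θ (G \ U) := by rw [hG, add_zero]
    _ ≤ θ U + M * ε := by
        gcongr
        exact (hM (G \ U)).trans (mul_le_mul_right hε _)

/-- The state of the Cantor-type construction after finitely many redistributions: a measure of
bounded density with mass larger than `a`, concentrated on an open set, and satisfying a Frostman
condition with a constant strictly below the final one `B`. -/
structure FrostmanState {Z : Type*} [MetricSpace Z] [MeasurableSpace Z] (m : Measure Z)
    (t B : ℝ) (a : ℝ≥0∞) where
  measure : Measure Z
  carrier : Set Z
  isOpen : IsOpen carrier
  measure_compl : measure carrierᶜ = 0
  lt_measure_univ : a < measure univ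
  exists_le_smul : ∃ M : ℝ≥0, measure ≤ M • m
  exists_isFrostman : ∃ b, 0 ≤ b ∧ b < B ∧ IsFrostman measure t b

theorem FrostmanState.le_measure_closure_carrier {Z : Type*} [MetricSpace Z]
    [MeasurableSpace Z] {m : Measure Z} {t B : ℝ} {a : ℝ≥0∞} (p : FrostmanState m t B a) :
    a ≤ p.measure (closure p.carrier) :=
  calc a ≤ p.measure univ := p.lt_measure_univ.le
    _ ≤ p.measure p.carrier + p.measure p.carrierᶜ := by
        rw [← union_compl_self p.carrier]
        exact measure_union_le _ _
    _ ≤ p.measure (closure p.carrier) := by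
        rw [p.measure_compl, add_zero]
        exact measure_mono subset_closure

section TransferSystem

variable {Z : Type*} [MetricSpace Z] [MeasurableSpace Z] [BorelSpace Z] {m : Measure Z}
  [IsFiniteMeasure m] {R P E : ℕ → Set Z} {s D C : ℝ} {c : ℝ≥0∞}

theorem IsTransferSystem.exists_pos_redistribute_small_ball_le
    (hS : IsTransferSystem m R P E s D C c) {θ : Measure Z} {M : ℝ≥0} (hM : θ ≤ M • m) {t b : ℝ}
    (hts : t < s) (hb : 0 < b) :
    ∃ ρ₁ > 0, ∀ J : Finset ℕ, (J : Set ℕ).PairwiseDisjoint R → ∀ x ρ, 0 < ρ → ρ ≤ ρ₁ →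
      redistribute m θ R P J (Metric.ball x ρ) ≤ ENNReal.ofReal (b * ρ ^ t) := by
  obtain ⟨ρ₁, hρ₁0, hρ₁1, hρ₁⟩ :=
    exists_pos_mul_rpow_le (M * C * (C * 2 ^ D)) (sub_pos.2 hts) hb
  refine ⟨ρ₁, hρ₁0, fun J hJ x ρ hρ hle => ?_⟩
  have hC := hS.pos_const
  calc redistribute m θ R P J (Metric.ball x ρ)
      ≤ M * ENNReal.ofReal (C * ρ ^ (s - D)) * m (Metric.ball x (2 * ρ)) :=
        redistribute_ball_le_of_spread hM (fun n _ => (hS.isClosed n).measurableSet)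
          (fun n _ => hS.measure_ne_zero n) (fun n _ => measure_ne_top m _) hJ
          fun n _ => hS.spread n x ρ hρ (hle.trans hρ₁1)
    _ ≤ M * ENNReal.ofReal (C * ρ ^ (s - D)) * ENNReal.ofReal (C * (2 * ρ) ^ D) := by
        gcongr
        exact hS.isFrostman _ _ (by positivity)
    _ = ENNReal.ofReal (M * (C * ρ ^ (s - D)) * (C * (2 * ρ) ^ D)) := by
        rw [ENNReal.ofReal_mul (p := M * (C * ρ ^ (s - D))) (by positivity),
          ENNReal.ofReal_mul (p := (M : ℝ)) (by positivity), ENNReal.ofReal_coe_nnreal]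
    _ = ENNReal.ofReal (M * C * (C * 2 ^ D) * ρ ^ (s - t) * ρ ^ t) := by
        rw [Real.mul_rpow zero_le_two hρ.le, mul_assoc _ (ρ ^ (s - t)), ← Real.rpow_add hρ,
          show s - t + t = (s - D) + D by ring, Real.rpow_add hρ]
        ring_nf
    _ ≤ ENNReal.ofReal (b * ρ ^ t) := by
        gcongr
        exact hρ₁ ρ hρ hle

theorem IsTransferSystem.exists_pos_isFrostman_redistribute
    (hS : IsTransferSystem m R P E s D C c) {θ : Measure Z} {M : ℝ≥0} (hM : θ ≤ M • m)
    {t b b' : ℝ} (ht : 0 < t) (hts : t < s) (hθ : IsFrostman θ t b) (hb : 0 ≤ b) (hbb' : b < b') :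
    ∃ η > 0, ∀ J : Finset ℕ, (J : Set ℕ).PairwiseDisjoint R →
      (∀ n ∈ J, ∀ x ∈ R n, ∀ y ∈ R n, dist x y ≤ η) →
      IsFrostman (redistribute m θ R P J) t b' := by
  obtain ⟨ρ₁, hρ₁, hsmall⟩ :=
    hS.exists_pos_redistribute_small_ball_le hM hts (hb.trans_lt hbb')
  obtain ⟨η, hη, hlarge⟩ := exists_pos_forall_mul_add_rpow_le ht hb hbb' hρ₁
  refine ⟨η, hη, fun J hJ hdiam x ρ hρ => (le_total ρ ρ₁).elim (hsmall J hJ x ρ hρ) fun hle => ?_⟩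
  calc redistribute m θ R P J (Metric.ball x ρ)
      ≤ θ (Metric.ball x (ρ + η)) :=
        redistribute_ball_le m θ (fun n _ => (hS.isClosed n).measurableSet)
          (fun n _ => hS.subset n) hJ hdiam x ρ
    _ ≤ ENNReal.ofReal (b * (ρ + η) ^ t) := hθ x _ (by positivity)
    _ ≤ ENNReal.ofReal (b' * ρ ^ t) := ENNReal.ofReal_le_ofReal (hlarge ρ hle)

theorem IsTransferSystem.exists_next_state (hS : IsTransferSystem m R P E s D C c) {t B : ℝ}
    {a : ℝ≥0∞} (ht : 0 < t) (hts : t < s) (p : FrostmanState m t B a) (N : ℕ) :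
    ∃ q : FrostmanState m t B a, closure q.carrier ⊆ p.carrier ∩ ⋃ n ≥ N, E n := by
  obtain ⟨M, hM⟩ := p.exists_le_smul
  have : IsFiniteMeasure p.measure := isFiniteMeasure_of_le _ hM
  obtain ⟨b, hb0, hbB, hb⟩ := p.exists_isFrostman
  obtain ⟨b', hbb', hb'B⟩ := exists_between hbB
  obtain ⟨η, hη0, hη⟩ := hS.exists_pos_isFrostman_redistribute hM ht hts hb hb0 hbb'
  obtain ⟨N₁, hN₁⟩ := eventually_atTop.1 (hS.dist_le η hη0)
  obtain ⟨ε, hε0, hε⟩ : ∃ ε > 0, a + M * ε < p.measure univ := by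
    obtain ⟨ε, hε0, hε⟩ := ENNReal.exists_nnreal_pos_mul_lt (ENNReal.coe_ne_top (r := M))
      (tsub_pos_of_lt p.lt_measure_univ).ne'
    exact ⟨ε, ENNReal.coe_pos.2 hε0, by rw [mul_comm, add_comm]; exact lt_tsub_iff_right.1 hε⟩
  obtain ⟨J, hJ, hJm⟩ := hS.filling.exists_isPacking_measure_sdiff_le hS.isClosed hS.pos_filling
    p.isOpen (max N N₁) hε0
  refine ⟨{
    measure := redistribute m p.measure R P J
    carrier := ⋃ n ∈ J, P n
    isOpen := isOpen_biUnion fun n _ => hS.isOpen n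
    measure_compl := redistribute_compl_biUnion _ _ _ fun n _ => (hS.isOpen n).measurableSet
    lt_measure_univ := ?_
    exists_le_smul := exists_redistribute_le_smul fun n _ => hS.measure_ne_zero n
    exists_isFrostman := ⟨b', hb0.trans hbb'.le, hb'B, hη J hJ.disjoint fun n hn =>
      hN₁ n ((le_max_right _ _).trans (hJ.le n hn))⟩ }, ?_⟩
  · rw [redistribute_univ _ (fun n _ => (hS.isClosed n).measurableSet) hJ.disjoint
      (fun n _ => hS.measure_ne_zero n) fun n _ => measure_ne_top m _]
    exact lt_of_add_lt_add_right
      (hε.trans_le (measure_univ_le_add_of_measure_sdiff_le hM p.measure_compl hJm))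
  · rw [Finset.closure_biUnion]
    refine iUnion₂_subset fun n hn => subset_inter ?_ ?_
    · exact (closure_minimal (hS.subset n) (hS.isClosed n)).trans (hJ.subset n hn)
    · exact (hS.closure_subset n).trans
        (subset_biUnion_of_mem (u := E) ((le_max_left _ _).trans (hJ.le n hn)))

theorem IsTransferSystem.le_dimH_limsup [CompactSpace Z] (hm : m univ ≠ 0)
    (hS : IsTransferSystem m R P E s D C c) {t : ℝ} (ht : 0 < t) (hts : t < s) (htD : t ≤ D) :
    ENNReal.ofReal t ≤ dimH (atTop.limsup E) := by
  set b : ℝ := C + m.real univ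
  let initial : FrostmanState m t (b + 1) (m univ / 2) :=
    { measure := m
      carrier := univ
      isOpen := isOpen_univ
      measure_compl := by simp
      lt_measure_univ := ENNReal.half_lt_self hm (measure_ne_top _ _)
      exists_le_smul := ⟨1, by simp⟩
      exists_isFrostman := ⟨b, add_nonneg hS.pos_const.le measureReal_nonneg, lt_add_one b,
        hS.isFrostman.mono_exponent hS.pos_const.le ht.le htD⟩ }
  choose next hnext using
    hS.exists_next_state (B := b + 1) (a := m univ / 2) ht hts
  let p : ℕ → FrostmanState m t (b + 1) (m univ / 2) :=
    fun k => Nat.rec initial (fun k q => next q k) k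
  have hp (k : ℕ) : closure (p (k + 1)).carrier ⊆ (p k).carrier ∩ ⋃ n ≥ k, E n := hnext (p k) k
  have hne : μH[t] (⋂ k, closure (p k).carrier) ≠ 0 :=
    hausdorffMeasure_iInter_ne_zero (fun k => isClosed_closure)
      (antitone_nat_of_succ_le fun k => ((hp k).trans inter_subset_left).trans subset_closure)
      (ENNReal.half_pos hm) (fun k => (p k).le_measure_closure_carrier) ht fun k =>
        let ⟨_, _, hlt, h⟩ := (p k).exists_isFrostman
        h.mono_const hlt.le
  refine (le_dimH_of_hausdorffMeasure_ne_zero (d := t.toNNReal)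
    (by rwa [Real.coe_toNNReal t ht.le])).trans (dimH_mono fun x hx => ?_)
  rw [mem_limsup_iff_frequently_mem, frequently_atTop]
  intro N
  simpa only [mem_iUnion, exists_prop] using (hp N (mem_iInter.1 hx (N + 1))).2

end TransferSystem

/-- A form of `D`-dimensional Ahlfors regularity with a single constant `C` and with fixed ranges
of radii: at most `1` for the lower bound, arbitrary for the upper bound. -/
structure IsRegularWith {Z : Type*} [MetricSpace Z] [MeasurableSpace Z] (m : Measure Z)
    (D C : ℝ) : Prop where
  pos : 0 < C
  le_measure_ball : ∀ z ρ, 0 < ρ → ρ ≤ 1 → ENNReal.ofReal (C⁻¹ * ρ ^ D) ≤ m (Metric.ball z ρ)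
  measure_closedBall_le :
    ∀ z ρ, 0 < ρ → m (Metric.closedBall z ρ) ≤ ENNReal.ofReal (C * ρ ^ D)

section Regular

variable {Z : Type*} [MetricSpace Z] [MeasurableSpace Z] {m : Measure Z} {D C : ℝ}

theorem IsRegularWith.mono {C' : ℝ} (h : IsRegularWith m D C) (hCC' : C ≤ C') :
    IsRegularWith m D C' where
  pos := h.pos.trans_le hCC'
  le_measure_ball z ρ h0 h1 :=
    (ENNReal.ofReal_le_ofReal (by have := h.pos; gcongr)).trans (h.le_measure_ball z ρ h0 h1)
  measure_closedBall_le z ρ h0 :=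
    (h.measure_closedBall_le z ρ h0).trans (ENNReal.ofReal_le_ofReal (by gcongr))

theorem IsRegularWith.isFrostman (h : IsRegularWith m D C) : IsFrostman m D C := fun z ρ hρ =>
  (measure_mono Metric.ball_subset_closedBall).trans (h.measure_closedBall_le z ρ hρ)

theorem exists_forall_isRegularWith {ι : Type*} [Finite ι] {W : ι → Type*}
    [∀ i, MetricSpace (W i)] [∀ i, MeasurableSpace (W i)] {η : ∀ i, Measure (W i)} {δ : ι → ℝ}
    (h : ∀ i, ∃ C, IsRegularWith (η i) (δ i) C) : ∃ C, ∀ i, IsRegularWith (η i) (δ i) C := by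
  choose C hC using h
  obtain ⟨B, hB⟩ := (finite_range C).bddAbove
  exact ⟨B, fun i => (hC i).mono (hB (mem_range_self i))⟩

theorem IsAhlfors.isFiniteMeasure [CompactSpace Z] (h : IsAhlfors m D) : IsFiniteMeasure m := by
  obtain ⟨c₁, c₂, r₀, -, -, -, hr₀, hb⟩ := h
  have : IsLocallyFiniteMeasure m := ⟨fun x =>
    ⟨Metric.ball x r₀, Metric.ball_mem_nhds x hr₀,
      (hb x r₀ hr₀ le_rfl).2.trans_lt ENNReal.ofReal_lt_top⟩⟩
  infer_instance

theorem IsAhlfors.exists_pos_le_measure_ball (h : IsAhlfors m D) :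
    ∃ C > 0, ∀ z ρ, 0 < ρ → ρ ≤ 1 → ENNReal.ofReal (C * ρ ^ D) ≤ m (Metric.ball z ρ) := by
  obtain ⟨c₁, c₂, r₀, hc₁, -, -, hr₀, hb⟩ := h
  set r₁ := min r₀ 1
  have hr₁ : 0 < r₁ := lt_min hr₀ one_pos
  refine ⟨c₁ * r₁ ^ D, by positivity, fun z ρ hρ0 hρ1 => ?_⟩
  calc ENNReal.ofReal (c₁ * r₁ ^ D * ρ ^ D)
      = ENNReal.ofReal (c₁ * (r₁ * ρ) ^ D) := by rw [Real.mul_rpow hr₁.le hρ0.le, mul_assoc]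
    _ ≤ m (Metric.ball z (r₁ * ρ)) :=
        (hb z _ (by positivity) ((mul_le_of_le_one_right hr₁.le hρ1).trans (min_le_left _ _))).1
    _ ≤ m (Metric.ball z ρ) := measure_mono
        (Metric.ball_subset_ball (mul_le_of_le_one_left hρ0.le (min_le_right _ _)))

theorem IsAhlfors.exists_measure_closedBall_le [IsFiniteMeasure m] (hD : 0 ≤ D)
    (h : IsAhlfors m D) :
    ∃ C, ∀ z ρ, 0 < ρ → m (Metric.closedBall z ρ) ≤ ENNReal.ofReal (C * ρ ^ D) := by
  obtain ⟨c₁, c₂, r₀, -, -, hc₂, hr₀, hb⟩ := h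
  have hm : 0 ≤ m.real univ := measureReal_nonneg
  refine ⟨c₂ * 2 ^ D + m.real univ * (2 / r₀) ^ D, fun z ρ hρ => ?_⟩
  obtain hle | hgt := le_or_gt (2 * ρ) r₀
  · calc m (Metric.closedBall z ρ) ≤ m (Metric.ball z (2 * ρ)) :=
          measure_mono (Metric.closedBall_subset_ball (by linarith))
      _ ≤ ENNReal.ofReal (c₂ * (2 * ρ) ^ D) := (hb z _ (by positivity) hle).2
      _ ≤ _ := by
          rw [Real.mul_rpow zero_le_two hρ.le, ← mul_assoc]
          gcongr
          exact le_add_of_nonneg_right (by positivity)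
  · have hone : 1 ≤ (2 / r₀ * ρ) ^ D := by
      refine Real.one_le_rpow ?_ hD
      rw [div_mul_eq_mul_div, one_le_div hr₀]
      exact hgt.le
    calc m (Metric.closedBall z ρ) ≤ m univ := measure_mono (subset_univ _)
      _ = ENNReal.ofReal (m.real univ) := by rw [ofReal_measureReal]
      _ ≤ ENNReal.ofReal (m.real univ * (2 / r₀ * ρ) ^ D) := by
          gcongr
          exact le_mul_of_one_le_right hm hone
      _ ≤ _ := by
          rw [Real.mul_rpow (by positivity) hρ.le, ← mul_assoc]
          gcongr
          exact le_add_of_nonneg_left (by positivity)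

theorem IsAhlfors.exists_isRegularWith [IsFiniteMeasure m] (hD : 0 ≤ D) (h : IsAhlfors m D) :
    ∃ C, IsRegularWith m D C := by
  obtain ⟨c, hc, hlower⟩ := h.exists_pos_le_measure_ball
  obtain ⟨C, hupper⟩ := h.exists_measure_closedBall_le hD
  refine ⟨max c⁻¹ C, by positivity, fun z ρ h0 h1 => ?_, fun z ρ h0 => ?_⟩
  · refine (ENNReal.ofReal_le_ofReal ?_).trans (hlower z ρ h0 h1)
    gcongr
    exact inv_le_of_inv_le₀ hc (le_max_left _ _)
  · refine (hupper z ρ h0).trans (ENNReal.ofReal_le_ofReal ?_)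
    gcongr
    exact le_max_right _ _

end Regular

theorem IsRegularWith.measure_closedBall_mul_le {Z₁ Z₂ : Type*} [MetricSpace Z₁]
    [MeasurableSpace Z₁] [MetricSpace Z₂] [MeasurableSpace Z₂] {m₁ : Measure Z₁} {m₂ : Measure Z₂}
    {D C₁ C₂ M ρ : ℝ} (h₁ : IsRegularWith m₁ D C₁) (h₂ : IsRegularWith m₂ D C₂) (hM : 0 < M)
    (hρ0 : 0 < ρ) (hρ1 : ρ ≤ 1) (x : Z₁) (z : Z₂) :
    m₁ (Metric.closedBall x (M * ρ)) ≤
      ENNReal.ofReal (C₁ * C₂ * M ^ D) * m₂ (Metric.ball z ρ) := by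
  have hC₁ := h₁.pos
  have hC₂ := h₂.pos
  calc m₁ (Metric.closedBall x (M * ρ))
      ≤ ENNReal.ofReal (C₁ * (M * ρ) ^ D) := h₁.measure_closedBall_le _ _ (by positivity)
    _ = ENNReal.ofReal (C₁ * C₂ * M ^ D) * ENNReal.ofReal (C₂⁻¹ * ρ ^ D) := by
        rw [← ENNReal.ofReal_mul (by positivity), Real.mul_rpow hM.le hρ0.le]
        congr 1
        field_simp
    _ ≤ _ := by
        gcongr
        exact h₂.le_measure_ball _ _ hρ0 hρ1

section CoLipschitz

variable {Z₁ Z₂ : Type*} [MetricSpace Z₁] [MeasurableSpace Z₁] [MetricSpace Z₂]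
  [MeasurableSpace Z₂] [BorelSpace Z₂] [SecondCountableTopology Z₂] {m₁ : Measure Z₁}
  {m₂ : Measure Z₂} {D C₁ C₂ L : ℝ} {φ : Z₁ → Z₂} {A : Set Z₁}

theorem measure_le_mul_measure_of_image_subset (hL : 0 < L) (h₁ : IsRegularWith m₁ D C₁)
    (h₂ : IsRegularWith m₂ D C₂) (hφ : ∀ a ∈ A, ∀ b ∈ A, dist a b ≤ L * dist (φ a) (φ b))
    {O : Set Z₂} (hO : IsOpen O) (hAO : φ '' A ⊆ O) :
    m₁ A ≤ ENNReal.ofReal (C₁ * C₂ * (5 * L) ^ D) * m₂ O := by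
  have hrad (a : Z₁) (ha : a ∈ A) : ∃ ρ : ℝ, 0 < ρ ∧ ρ ≤ 1 ∧ Metric.ball (φ a) ρ ⊆ O := by
    obtain ⟨e, he, hball⟩ := Metric.isOpen_iff.1 hO (φ a) (hAO ⟨a, ha, rfl⟩)
    exact ⟨min e 1, lt_min he one_pos, min_le_right _ _,
      (Metric.ball_subset_ball (min_le_left _ _)).trans hball⟩
  choose! ρ hρ0 hρ1 hρO using hrad
  obtain ⟨u, huA, hdisj, henlarge⟩ := Vitali.exists_disjoint_subfamily_covering_enlargement_ball
    A φ ρ 1 hρ1 5 (by norm_num)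
  have hcount : u.Countable := hdisj.countable_of_isOpen (fun a _ => Metric.isOpen_ball)
    fun a ha => ⟨φ a, Metric.mem_ball_self (hρ0 a (huA ha))⟩
  have hcover : A ⊆ ⋃ b ∈ u, Metric.closedBall b (5 * L * ρ b) := fun a ha => by
    obtain ⟨b, hb, hab⟩ := henlarge a ha
    refine mem_biUnion hb (Metric.mem_closedBall.2 ?_)
    calc dist a b ≤ L * dist (φ a) (φ b) := hφ a ha b (huA hb)
      _ ≤ L * (5 * ρ b) := by
          gcongr
          exact (Metric.mem_ball.1 (hab (Metric.mem_ball_self (hρ0 a ha)))).le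
      _ = 5 * L * ρ b := by ring
  calc m₁ A ≤ ∑' b : u, m₁ (Metric.closedBall b (5 * L * ρ b)) :=
        (measure_mono hcover).trans (measure_biUnion_le _ hcount _)
    _ ≤ ∑' b : u, ENNReal.ofReal (C₁ * C₂ * (5 * L) ^ D) * m₂ (Metric.ball (φ b) (ρ b)) :=
        ENNReal.tsum_le_tsum fun b => h₁.measure_closedBall_mul_le h₂ (by positivity)
          (hρ0 b (huA b.2)) (hρ1 b (huA b.2)) _ _
    _ = ENNReal.ofReal (C₁ * C₂ * (5 * L) ^ D) * m₂ (⋃ b ∈ u, Metric.ball (φ b) (ρ b)) := by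
        rw [ENNReal.tsum_mul_left, measure_biUnion hcount hdisj fun b _ => measurableSet_ball]
    _ ≤ ENNReal.ofReal (C₁ * C₂ * (5 * L) ^ D) * m₂ O := by
        gcongr
        exact iUnion₂_subset fun b hb => hρO b (huA hb)

theorem measure_le_mul_measure_image [IsFiniteMeasure m₂] (hL : 0 < L)
    (h₁ : IsRegularWith m₁ D C₁) (h₂ : IsRegularWith m₂ D C₂)
    (hφ : ∀ a ∈ A, ∀ b ∈ A, dist a b ≤ L * dist (φ a) (φ b)) :
    m₁ A ≤ ENNReal.ofReal (C₁ * C₂ * (5 * L) ^ D) * m₂ (φ '' A) := by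
  have hC₁ := h₁.pos
  have hC₂ := h₂.pos
  have hne : ENNReal.ofReal (C₁ * C₂ * (5 * L) ^ D) ≠ 0 :=
    (ENNReal.ofReal_pos.2 (by positivity)).ne'
  rw [(φ '' A).measure_eq_iInf_isOpen m₂]
  simp only [ENNReal.mul_iInf_of_ne hne ENNReal.ofReal_ne_top]
  exact le_iInf₂ fun O hAO => le_iInf fun hO =>
    measure_le_mul_measure_of_image_subset hL h₁ h₂ hφ hO hAO

end CoLipschitz

/-- The open rectangle with centre `y` and half-sides `a i`. -/
def box {ι : Type*} {W : ι → Type*} [∀ i, PseudoMetricSpace (W i)] (y : ∀ i, W i) (a : ι → ℝ) :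
    Set (∀ i, W i) :=
  univ.pi fun i => Metric.ball (y i) (a i)

/-- The closed rectangle with centre `y` and half-sides `a i`. -/
def closedBox {ι : Type*} {W : ι → Type*} [∀ i, PseudoMetricSpace (W i)] (y : ∀ i, W i)
    (a : ι → ℝ) : Set (∀ i, W i) :=
  univ.pi fun i => Metric.closedBall (y i) (a i)

section Box

variable {ι : Type*} {W : ι → Type*} [∀ i, PseudoMetricSpace (W i)] {y : ∀ i, W i} {a b : ι → ℝ}

theorem mem_box {x : ∀ i, W i} : x ∈ box y a ↔ ∀ i, dist (x i) (y i) < a i := by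
  simp [box]

theorem mem_closedBox {x : ∀ i, W i} : x ∈ closedBox y a ↔ ∀ i, dist (x i) (y i) ≤ a i := by
  simp [closedBox]

theorem mem_box_self (ha : ∀ i, 0 < a i) : y ∈ box y a :=
  mem_box.2 fun i => by simpa using ha i

theorem box_subset_closedBox : box y a ⊆ closedBox y a :=
  pi_mono fun _ _ => Metric.ball_subset_closedBall

theorem closedBox_mono (h : ∀ i, a i ≤ b i) : closedBox y a ⊆ closedBox y b :=
  pi_mono fun i _ => Metric.closedBall_subset_closedBall (h i)

theorem isOpen_box [Finite ι] : IsOpen (box y a) :=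
  isOpen_set_pi finite_univ fun _ _ => Metric.isOpen_ball

theorem isClosed_closedBox : IsClosed (closedBox y a) :=
  isClosed_set_pi fun _ _ => Metric.isClosed_closedBall

theorem dist_le_of_mem_closedBox [Fintype ι] {η : ℝ} (hη : 0 ≤ η) (ha : ∀ i, a i ≤ η)
    {x x' : ∀ i, W i} (hx : x ∈ closedBox y a) (hx' : x' ∈ closedBox y a) :
    dist x x' ≤ 2 * η :=
  (dist_pi_le_iff (by positivity)).2 fun i => by
    linarith [dist_triangle_right (x i) (x' i) (y i), mem_closedBox.1 hx i,
      mem_closedBox.1 hx' i, ha i]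

end Box

section BoxMeasure

variable {ι : Type*} [Fintype ι] {W : ι → Type*} [∀ i, MetricSpace (W i)]
  [∀ i, MeasurableSpace (W i)] {η : ∀ i, Measure (W i)} [∀ i, SigmaFinite (η i)]
  {δ : ι → ℝ} {C : ℝ}

theorem le_measure_box (hη : ∀ i, IsRegularWith (η i) (δ i) C) (y : ∀ i, W i) {a : ι → ℝ}
    (ha0 : ∀ i, 0 < a i) (ha1 : ∀ i, a i ≤ 1) :
    ENNReal.ofReal ((C ^ Fintype.card ι)⁻¹ * ∏ i, a i ^ δ i) ≤ Measure.pi η (box y a) := by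
  rw [box, Measure.pi_pi, ← Finset.card_univ, ← inv_pow, ← Finset.prod_const,
    ← Finset.prod_mul_distrib, ENNReal.ofReal_prod_of_nonneg fun i _ =>
      mul_nonneg (inv_nonneg.2 (hη i).pos.le) (Real.rpow_nonneg (ha0 i).le _)]
  exact Finset.prod_le_prod' fun i _ => (hη i).le_measure_ball _ _ (ha0 i) (ha1 i)

theorem measure_closedBox_le (hη : ∀ i, IsRegularWith (η i) (δ i) C) (y : ∀ i, W i) {a : ι → ℝ}
    (ha0 : ∀ i, 0 < a i) :
    Measure.pi η (closedBox y a) ≤ ENNReal.ofReal (C ^ Fintype.card ι * ∏ i, a i ^ δ i) := by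
  rw [closedBox, Measure.pi_pi, ← Finset.card_univ, ← Finset.prod_const,
    ← Finset.prod_mul_distrib, ENNReal.ofReal_prod_of_nonneg fun i _ =>
      mul_nonneg (hη i).pos.le (Real.rpow_nonneg (ha0 i).le _)]
  exact Finset.prod_le_prod' fun i _ => (hη i).measure_closedBall_le _ _ (ha0 i)

theorem isRegularWith_pi (hη : ∀ i, IsRegularWith (η i) (δ i) C) :
    IsRegularWith (Measure.pi η) (∑ i, δ i) (C ^ Fintype.card ι) where
  pos := by
    rw [← Finset.card_univ, ← Finset.prod_const]
    exact Finset.prod_pos fun i _ => (hη i).pos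
  le_measure_ball z ρ h0 h1 := by
    rw [ball_pi _ h0, Real.rpow_sum_of_pos h0]
    exact le_measure_box hη z (fun _ => h0) fun _ => h1
  measure_closedBall_le z ρ h0 := by
    rw [closedBall_pi _ h0.le, Real.rpow_sum_of_pos h0]
    exact measure_closedBox_le hη z fun _ => h0

end BoxMeasure

/-- A map which is bi-Lipschitz with constant `L` at distances smaller than `ε`, and whose local
inverses are defined on balls of radius `ε`. -/
structure IsLocallyBilipschitz {Z₁ Z₂ : Type*} [MetricSpace Z₁] [MetricSpace Z₂] (φ : Z₁ → Z₂)
    (L ε : ℝ) : Prop where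
  one_le : 1 ≤ L
  pos : 0 < ε
  dist_image_le : ∀ x y, dist x y < ε → dist (φ x) (φ y) ≤ L * dist x y
  dist_le : ∀ x y, dist x y < ε → dist x y ≤ L * dist (φ x) (φ y)
  exists_preimage : ∀ y z, dist z (φ y) < ε → ∃ x, φ x = z ∧ dist x y ≤ L * dist z (φ y)

namespace IsLocallyBilipschitz

variable {Z₁ Z₂ : Type*} [MetricSpace Z₁] [MetricSpace Z₂] {φ : Z₁ → Z₂} {L ε : ℝ}

theorem const_pos (h : IsLocallyBilipschitz φ L ε) : 0 < L := one_pos.trans_le h.one_le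

theorem continuous (h : IsLocallyBilipschitz φ L ε) : Continuous φ := by
  have hL := h.const_pos
  refine Metric.continuous_iff.2 fun y η hη =>
    ⟨min ε (η / L), lt_min h.pos (by positivity), fun x hx => ?_⟩
  calc dist (φ x) (φ y) ≤ L * dist x y := h.dist_image_le x y (hx.trans_le (min_le_left _ _))
    _ < L * (η / L) := by gcongr; exact hx.trans_le (min_le_right _ _)
    _ = η := mul_div_cancel₀ _ hL.ne'

theorem isOpenMap (h : IsLocallyBilipschitz φ L ε) : IsOpenMap φ := by
  have hL := h.const_pos
  refine fun O hO => Metric.isOpen_iff.2 ?_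
  rintro _ ⟨y, hy, rfl⟩
  obtain ⟨η, hη, hO⟩ := Metric.isOpen_iff.1 hO y hy
  refine ⟨min ε (η / L), lt_min h.pos (by positivity), fun z hz => ?_⟩
  obtain ⟨x, rfl, hx⟩ := h.exists_preimage y z (lt_of_lt_of_le hz (min_le_left _ _))
  refine ⟨x, hO ?_, rfl⟩
  calc dist x y ≤ L * dist (φ x) (φ y) := hx
    _ < L * (η / L) := by gcongr; exact lt_of_lt_of_le hz (min_le_right _ _)
    _ = η := mul_div_cancel₀ _ hL.ne'

theorem injOn (h : IsLocallyBilipschitz φ L ε) {A : Set Z₁}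
    (hA : ∀ a ∈ A, ∀ b ∈ A, dist a b < ε) : InjOn φ A := fun a ha b hb hab =>
  dist_le_zero.1 (by simpa [hab] using h.dist_le a b (hA a ha b hb))

variable [MeasurableSpace Z₁] [MeasurableSpace Z₂] {m₁ : Measure Z₁} {m₂ : Measure Z₂}
  {D C₁ C₂ : ℝ} {A : Set Z₁}

theorem measure_le_mul_measure_image [BorelSpace Z₂] [SecondCountableTopology Z₂]
    [IsFiniteMeasure m₂] (h : IsLocallyBilipschitz φ L ε) (h₁ : IsRegularWith m₁ D C₁)
    (h₂ : IsRegularWith m₂ D C₂) (hA : ∀ a ∈ A, ∀ b ∈ A, dist a b < ε) :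
    m₁ A ≤ ENNReal.ofReal (C₁ * C₂ * (5 * L) ^ D) * m₂ (φ '' A) :=
  _root_.measure_le_mul_measure_image h.const_pos h₁ h₂ fun a ha b hb =>
    h.dist_le a b (hA a ha b hb)

theorem measure_image_le_mul_measure [BorelSpace Z₁] [SecondCountableTopology Z₁]
    [IsFiniteMeasure m₁] (h : IsLocallyBilipschitz φ L ε) (h₁ : IsRegularWith m₁ D C₁)
    (h₂ : IsRegularWith m₂ D C₂) (hA : ∀ a ∈ A, ∀ b ∈ A, dist a b < ε) :
    m₂ (φ '' A) ≤ ENNReal.ofReal (C₂ * C₁ * (5 * L) ^ D) * m₁ A := by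
  obtain rfl | ⟨a₀, -⟩ := A.eq_empty_or_nonempty
  · simp
  have : Nonempty Z₁ := ⟨a₀⟩
  have hinv := (h.injOn hA).leftInvOn_invFunOn
  have hlip : ∀ x ∈ φ '' A, ∀ y ∈ φ '' A,
      dist x y ≤ L * dist (Function.invFunOn φ A x) (Function.invFunOn φ A y) := by
    rintro _ ⟨a, ha, rfl⟩ _ ⟨b, hb, rfl⟩
    rw [hinv ha, hinv hb]
    exact h.dist_image_le a b (hA a ha b hb)
  simpa only [hinv.image_image] using
    _root_.measure_le_mul_measure_image h.const_pos h₂ h₁ hlip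

end IsLocallyBilipschitz

section EuclideanDistance

variable {W : Fin d → Type*} [∀ i, MetricSpace (W i)]

theorem dist_le_dist2 (x y : ∀ i, W i) : dist x y ≤ dist2 x y :=
  (dist_pi_le_iff (Real.sqrt_nonneg _)).2 fun i => Real.le_sqrt_of_sq_le
    (Finset.single_le_sum (f := fun i => dist (x i) (y i) ^ 2) (fun _ _ => sq_nonneg _)
      (Finset.mem_univ i))

theorem dist2_le_mul_dist (x y : ∀ i, W i) : dist2 x y ≤ d * dist x y := by
  refine Real.sqrt_le_iff.2 ⟨by positivity, ?_⟩
  calc ∑ i, dist (x i) (y i) ^ 2 ≤ ∑ _i : Fin d, dist x y ^ 2 := by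
        gcongr with i
        exact dist_le_pi_dist x y i
    _ = d * dist x y ^ 2 := by simp
    _ ≤ (d * dist x y) ^ 2 := by
        rw [mul_pow]
        gcongr
        exact_mod_cast Nat.le_self_pow two_ne_zero d

theorem mem_ball2_of_dist_lt (hd : 1 ≤ d) {x y : ∀ i, W i} {ε₀ : ℝ} (h : dist x y < ε₀ / d) :
    x ∈ ball2 y ε₀ :=
  (dist2_le_mul_dist x y).trans_lt (by rwa [lt_div_iff₀' (by exact_mod_cast hd)] at h)

theorem IsLocalIsometry.isLocallyBilipschitz {V : Fin d → Type*} [∀ i, MetricSpace (V i)]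
    {φ : (∀ i, W i) → ∀ i, V i} {ε₀ : ℝ} (hd : 1 ≤ d) (hε₀ : 0 < ε₀)
    (h : IsLocalIsometry φ ε₀) : IsLocallyBilipschitz φ d (ε₀ / d) where
  one_le := by exact_mod_cast hd
  pos := div_pos hε₀ (by exact_mod_cast hd)
  dist_image_le x y hxy :=
    calc dist (φ x) (φ y) ≤ dist2 (φ x) (φ y) := dist_le_dist2 _ _
      _ = dist2 x y := (h y).2 x (mem_ball2_of_dist_lt hd hxy)
      _ ≤ d * dist x y := dist2_le_mul_dist x y
  dist_le x y hxy :=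
    calc dist x y ≤ dist2 x y := dist_le_dist2 x y
      _ = dist2 (φ x) (φ y) := ((h y).2 x (mem_ball2_of_dist_lt hd hxy)).symm
      _ ≤ d * dist (φ x) (φ y) := dist2_le_mul_dist _ _
  exists_preimage y z hz := by
    obtain ⟨x, hx, rfl⟩ := (h y).1.surjOn (mem_ball2_of_dist_lt hd hz)
    refine ⟨x, rfl, ?_⟩
    calc dist x y ≤ dist2 x y := dist_le_dist2 x y
      _ = dist2 (φ x) (φ y) := ((h y).2 x hx).symm
      _ ≤ d * dist (φ x) (φ y) := dist2_le_mul_dist _ _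

theorem diam2_le_of_dist_le {S : Set (∀ i, W i)} {η : ℝ} (hη : 0 ≤ η)
    (hS : ∀ x ∈ S, ∀ y ∈ S, dist x y ≤ η) : diam2 S ≤ d * η := by
  refine Real.sSup_le ?_ (by positivity)
  rintro _ ⟨x, hx, y, hy, rfl⟩
  exact (dist2_le_mul_dist x y).trans (by gcongr; exact hS x hx y hy)

end EuclideanDistance

/-- The contribution to the exponent of a ball of radius `r ^ A` of a coordinate in which the
larger rectangle has side `r ^ u` and the smaller one has side `r ^ v`. -/
def sideProfile (u : ℝ) (v : ℝ≥0∞) (A : ℝ) : ℝ :=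
  min A u + if v = ⊤ then 0 else max 0 (A - v.toReal)

section SideProfile

variable {u a b A : ℝ} {v : ℝ≥0∞}

theorem sideProfile_le (huv : ENNReal.ofReal u ≤ v) : sideProfile u v A ≤ max A 0 := by
  unfold sideProfile
  split_ifs with hv
  · rw [add_zero]
    exact (min_le_left _ _).trans (le_max_left _ _)
  · have huv' : u ≤ v.toReal := (ENNReal.ofReal_le_iff_le_toReal hv).1 huv
    rcases le_total A v.toReal with h | h
    · rw [max_eq_left (by linarith), add_zero]
      exact (min_le_left _ _).trans (le_max_left _ _)
    · rw [max_eq_right (by linarith)]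
      linarith [min_le_right A u, le_max_left A 0]

theorem sideProfile_nonneg (hu : 0 ≤ u) (hA : 0 ≤ A) : 0 ≤ sideProfile u v A := by
  unfold sideProfile
  split_ifs
  exacts [add_nonneg (le_min hA hu) le_rfl, add_nonneg (le_min hA hu) (le_max_left _ _)]

theorem sideProfile_top_mono (hab : a ≤ b) : sideProfile u ⊤ a ≤ sideProfile u ⊤ b := by
  simp only [sideProfile, if_pos, add_zero]
  gcongr

theorem sideProfile_eq_add_sub (hv : v ≠ ⊤) (huv : ENNReal.ofReal u ≤ v) (hA : v.toReal ≤ A) :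
    sideProfile u v A = u + (A - v.toReal) := by
  have huv' : u ≤ v.toReal := (ENNReal.ofReal_le_iff_le_toReal hv).1 huv
  rw [sideProfile, if_neg hv, min_eq_right (huv'.trans hA), max_eq_right (sub_nonneg.2 hA)]

theorem sideProfile_eq_min (hv : v ≠ ⊤) (hA : A ≤ v.toReal) : sideProfile u v A = min A u := by
  rw [sideProfile, if_neg hv, max_eq_left (sub_nonpos.2 hA), add_zero]

theorem concaveOn_sideProfile (h : v ≠ ⊤ → v.toReal ≤ a ∨ b ≤ v.toReal) :
    ConcaveOn ℝ (Icc a b) (sideProfile u v) := by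
  have hmin : ConcaveOn ℝ (Icc a b) fun A => min A u :=
    (concaveOn_id (convex_Icc a b)).inf (concaveOn_const u (convex_Icc a b))
  refine hmin.add ?_
  split_ifs with hv
  · exact concaveOn_const 0 (convex_Icc a b)
  rcases h hv with hva | hbv
  · refine ((concaveOn_id (convex_Icc a b)).sub
      (convexOn_const v.toReal (convex_Icc a b))).congr fun A hA => ?_
    exact (max_eq_right (sub_nonneg.2 (hva.trans hA.1))).symm
  · refine (concaveOn_const 0 (convex_Icc a b)).congr fun A hA => ?_
    exact (max_eq_left (sub_nonpos.2 (hA.2.trans hbv))).symm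

theorem toReal_mul_dimNumI_term {w : ℝ≥0∞} (hw0 : 0 < w) (hw : w ≠ ⊤)
    (huv : ENNReal.ofReal u ≤ v) (D : ℝ) :
    ((if w.toReal < u then D else 0)
        + (if v ≤ w then D * (1 - (v.toReal - u) / w.toReal) else 0)
        + if ¬ w.toReal < u ∧ ¬ v ≤ w then D * u / w.toReal else 0) * w.toReal =
      D * sideProfile u v w.toReal := by
  have hpos : 0 < w.toReal := ENNReal.toReal_pos hw0.ne' hw
  by_cases hvw : v ≤ w
  · have hv : v ≠ ⊤ := (hvw.trans_lt hw.lt_top).ne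
    have hvw' : v.toReal ≤ w.toReal := ENNReal.toReal_mono hw hvw
    have huv' : u ≤ v.toReal := (ENNReal.ofReal_le_iff_le_toReal hv).1 huv
    rw [sideProfile_eq_add_sub hv huv hvw', if_neg (huv'.trans hvw').not_gt, if_pos hvw,
      if_neg fun h => h.2 hvw]
    field_simp
    ring
  · have hprofile : sideProfile u v w.toReal = min w.toReal u := by
      by_cases hv : v = ⊤
      · rw [sideProfile, if_pos hv, add_zero]
      · exact sideProfile_eq_min hv (ENNReal.toReal_mono hv (le_of_not_ge hvw))
    rw [hprofile, if_neg hvw]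
    by_cases hwu : w.toReal < u
    · simp [hwu, min_eq_left hwu.le]
    · rw [if_neg hwu, if_pos ⟨hwu, hvw⟩, min_eq_right (le_of_not_gt hwu)]
      field_simp
      ring

end SideProfile

section DimensionalNumber

variable {δ u : Fin d → ℝ} {v : Fin d → ℝ≥0∞} {a A : ℝ}

/-- The exponent of a ball of radius `r ^ A` for rectangles with sides `r ^ u k` and `r ^ v k`:
it is piecewise affine in `A`, with convex breakpoints only at the finite `v k`. -/
def dimProfile (δ u : Fin d → ℝ) (v : Fin d → ℝ≥0∞) (A : ℝ) : ℝ :=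
  ∑ k, δ k * sideProfile (u k) (v k) A

theorem dimNumI_mul_toReal (hv : ∀ k, 0 < v k) (huv : ∀ k, ENNReal.ofReal (u k) ≤ v k)
    {i : Fin d} (hi : v i ≠ ⊤) :
    dimNumI δ u v i * (v i).toReal = dimProfile δ u v (v i).toReal := by
  rw [dimNumI, if_neg hi, Finset.sum_filter, Finset.sum_filter, Finset.sum_filter,
    ← Finset.sum_add_distrib, ← Finset.sum_add_distrib, Finset.sum_mul]
  exact Finset.sum_congr rfl fun k _ => toReal_mul_dimNumI_term (hv i) hi (huv k) (δ k)

theorem dimNum_le_dimNumI (i : Fin d) : dimNum δ u v ≤ dimNumI δ u v i :=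
  ciInf_le (Set.finite_range _).bddBelow i

theorem dimNum_mul_toReal_le (hv : ∀ k, 0 < v k) (huv : ∀ k, ENNReal.ofReal (u k) ≤ v k)
    {i : Fin d} (hi : v i ≠ ⊤) :
    dimNum δ u v * (v i).toReal ≤ dimProfile δ u v (v i).toReal := by
  rw [← dimNumI_mul_toReal hv huv hi]
  gcongr
  exact dimNum_le_dimNumI i

theorem dimNum_le_sum_ite (hd : 1 ≤ d) (hδ : ∀ k, 0 ≤ δ k) (hv : ∀ k, 0 < v k)
    (huv : ∀ k, ENNReal.ofReal (u k) ≤ v k) :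
    dimNum δ u v ≤ ∑ k, if v k = ⊤ then 0 else δ k := by
  by_cases htop : ∃ i, v i = ⊤
  · obtain ⟨i, hi⟩ := htop
    refine (dimNum_le_dimNumI i).trans ?_
    simp only [dimNumI, if_pos hi, Finset.sum_filter, ne_eq, ite_not, le_refl]
  · push Not at htop
    have hpos : 0 < (v ⟨0, hd⟩).toReal := ENNReal.toReal_pos (hv _).ne' (htop _)
    refine le_of_mul_le_mul_right ((dimNum_mul_toReal_le hv huv (htop _)).trans ?_) hpos
    rw [dimProfile, Finset.sum_mul]
    refine Finset.sum_le_sum fun k _ => ?_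
    rw [if_neg (htop k)]
    exact mul_le_mul_of_nonneg_left
      ((sideProfile_le (huv k)).trans_eq (max_eq_left hpos.le)) (hδ k)

theorem dimNum_le_sum (hd : 1 ≤ d) (hδ : ∀ k, 0 ≤ δ k) (hv : ∀ k, 0 < v k)
    (huv : ∀ k, ENNReal.ofReal (u k) ≤ v k) : dimNum δ u v ≤ ∑ k, δ k := by
  refine (dimNum_le_sum_ite hd hδ hv huv).trans (Finset.sum_le_sum fun k _ => ?_)
  split_ifs
  exacts [hδ k, le_rfl]

theorem dimProfile_nonneg (hδ : ∀ k, 0 ≤ δ k) (hu : ∀ k, 0 ≤ u k) (hA : 0 ≤ A) :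
    0 ≤ dimProfile δ u v A :=
  Finset.sum_nonneg fun k _ => mul_nonneg (hδ k) (sideProfile_nonneg (hu k) hA)

theorem concaveOn_dimProfile {b : ℝ} (hδ : ∀ k, 0 ≤ δ k)
    (h : ∀ k, v k ≠ ⊤ → (v k).toReal ≤ a ∨ b ≤ (v k).toReal) :
    ConcaveOn ℝ (Icc a b) (dimProfile δ u v) := by
  have hsum := Finset.sum_induction
    (f := fun k A => δ k * sideProfile (u k) (v k) A) (s := Finset.univ)
    (ConcaveOn ℝ (Icc a b)) (fun _ _ => ConcaveOn.add) (concaveOn_const 0 (convex_Icc a b))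
    fun k _ => (concaveOn_sideProfile (h k)).smul (hδ k)
  convert hsum using 1
  ext A
  simp only [dimProfile, Finset.sum_apply]

/-- Beyond the last finite `v k` the profile grows at least at the rate of the factors with
`v k` finite, which is one of the competitors in the minimum `dimNum` if some `v k` is infinite. -/
theorem dimNum_mul_le_dimProfile_of_forall_le (hd : 1 ≤ d) (hδ : ∀ k, 0 ≤ δ k)
    (hv : ∀ k, 0 < v k) (huv : ∀ k, ENNReal.ofReal (u k) ≤ v k) (haA : a ≤ A)
    (ha : dimNum δ u v * a ≤ dimProfile δ u v a) (hva : ∀ k, v k ≠ ⊤ → (v k).toReal ≤ a) :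
    dimNum δ u v * A ≤ dimProfile δ u v A := by
  have hgrowth : ∀ k, δ k * sideProfile (u k) (v k) a +
      (if v k = ⊤ then 0 else δ k) * (A - a) ≤ δ k * sideProfile (u k) (v k) A := by
    intro k
    split_ifs with hk
    · rw [zero_mul, add_zero, hk]
      exact mul_le_mul_of_nonneg_left (sideProfile_top_mono haA) (hδ k)
    · rw [sideProfile_eq_add_sub hk (huv k) (hva k hk),
        sideProfile_eq_add_sub hk (huv k) ((hva k hk).trans haA)]
      exact le_of_eq (by ring)
  calc dimNum δ u v * A = dimNum δ u v * a + dimNum δ u v * (A - a) := by ring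
    _ ≤ dimProfile δ u v a + (∑ k, if v k = ⊤ then 0 else δ k) * (A - a) := by
        gcongr
        exact dimNum_le_sum_ite hd hδ hv huv
    _ ≤ dimProfile δ u v A := by
        rw [dimProfile, Finset.sum_mul, ← Finset.sum_add_distrib]
        exact Finset.sum_le_sum fun k _ => hgrowth k

theorem exists_le_dimNum_mul_le_dimProfile (hδ : ∀ k, 0 ≤ δ k) (hu : ∀ k, 0 ≤ u k)
    (hv : ∀ k, 0 < v k) (huv : ∀ k, ENNReal.ofReal (u k) ≤ v k) (hA : 0 ≤ A) :
    ∃ a ≤ A, dimNum δ u v * a ≤ dimProfile δ u v a ∧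
      ∀ k, v k ≠ ⊤ → (v k).toReal ≤ A → (v k).toReal ≤ a := by
  by_cases! hne : ∃ k, v k ≠ ⊤ ∧ (v k).toReal ≤ A
  · obtain ⟨i, ⟨hi, hiA⟩, hmax⟩ :=
      {k | v k ≠ ⊤ ∧ (v k).toReal ≤ A}.toFinite.exists_maximalFor (fun k => (v k).toReal) _ hne
    exact ⟨(v i).toReal, hiA, dimNum_mul_toReal_le hv huv hi, fun k hk hkA =>
      (le_total _ _).elim id fun h => hmax ⟨hk, hkA⟩ h⟩
  · refine ⟨0, hA, ?_, fun k hk hkA => absurd hkA (hne k hk).not_ge⟩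
    rw [mul_zero]
    exact dimProfile_nonneg hδ hu le_rfl

theorem dimNum_mul_le_dimProfile (hd : 1 ≤ d) (hδ : ∀ k, 0 ≤ δ k) (hu : ∀ k, 0 ≤ u k)
    (hv : ∀ k, 0 < v k) (huv : ∀ k, ENNReal.ofReal (u k) ≤ v k) (hA : 0 ≤ A) :
    dimNum δ u v * A ≤ dimProfile δ u v A := by
  obtain ⟨a, haA, ha, hva⟩ := exists_le_dimNum_mul_le_dimProfile hδ hu hv huv hA
  by_cases! hne : ∃ k, v k ≠ ⊤ ∧ A < (v k).toReal
  · obtain ⟨j, ⟨hj, hAj⟩, hmin⟩ :=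
      {k | v k ≠ ⊤ ∧ A < (v k).toReal}.toFinite.exists_minimalFor (fun k => (v k).toReal) _ hne
    have hconcave : ConcaveOn ℝ (Icc a (v j).toReal)
        fun A => dimProfile δ u v A - dimNum δ u v * A := by
      refine (concaveOn_dimProfile hδ fun k hk => ?_).sub
        ((LinearMap.mulLeft ℝ (dimNum δ u v)).convexOn (convex_Icc _ _))
      refine (le_or_gt (v k).toReal A).imp (hva k hk) fun h => ?_
      exact (le_total _ _).elim id fun h' => hmin ⟨hk, h⟩ h'
    refine sub_nonneg.1 (le_trans (le_min ?_ ?_)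
      (hconcave.min_le_of_mem_Icc (left_mem_Icc.2 (haA.trans hAj.le))
        (right_mem_Icc.2 (haA.trans hAj.le)) ⟨haA, hAj.le⟩))
    exacts [sub_nonneg.2 ha, sub_nonneg.2 (dimNum_mul_toReal_le hv huv hj)]
  · exact dimNum_mul_le_dimProfile_of_forall_le hd hδ hv huv haA ha fun k hk =>
      hva k hk (hne k hk)

theorem sideProfile_sub_le {u v' u' ε : ℝ} {v : ℝ≥0∞} (hu : |u' - u| ≤ ε)
    (hv : v ≠ ⊤ → v' ≤ v.toReal + ε) :
    sideProfile u v A - 4 * ε ≤ (u - ε - u') + min A u' + max 0 (A - v') := by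
  obtain ⟨hu₁, hu₂⟩ := abs_le.1 hu
  have hmin : min A u - ε ≤ min A u' :=
    le_min (by linarith [min_le_left A u]) (by linarith [min_le_right A u])
  unfold sideProfile
  split_ifs with hk
  · linarith [le_max_left 0 (A - v')]
  · have hmax : max 0 (A - v.toReal) ≤ max 0 (A - v') + ε :=
      max_le (by linarith [le_max_left 0 (A - v')])
        (by linarith [le_max_right 0 (A - v'), hv hk])
    linarith

/-- Since `A` stays away from `0`, a loss of `(dimNum δ u v - s) * A₀` absorbs the perturbation of
the exponents. -/
theorem mul_le_sum_of_abs_sub_le (hd : 1 ≤ d) (hδ : ∀ k, 0 ≤ δ k) (hu : ∀ k, 0 ≤ u k)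
    (hv : ∀ k, 0 < v k) (huv : ∀ k, ENNReal.ofReal (u k) ≤ v k) {s ε A₀ : ℝ} (hA₀ : 0 ≤ A₀)
    (hA : A₀ ≤ A) (hs : s ≤ dimNum δ u v)
    (hε : 4 * (∑ k, δ k) * ε ≤ (dimNum δ u v - s) * A₀) {u' v' : Fin d → ℝ}
    (hu' : ∀ k, |u' k - u k| ≤ ε) (hv' : ∀ k, v k ≠ ⊤ → v' k ≤ (v k).toReal + ε) :
    s * A ≤ ∑ k, δ k * ((u k - ε - u' k) + min A (u' k) + max 0 (A - v' k)) :=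
  calc s * A ≤ dimNum δ u v * A - (dimNum δ u v - s) * A₀ := by nlinarith
    _ ≤ dimProfile δ u v A - ∑ k, δ k * (4 * ε) := by
        rw [← Finset.sum_mul]
        linarith [dimNum_mul_le_dimProfile hd hδ hu hv huv (hA₀.trans hA)]
    _ ≤ ∑ k, δ k * ((u k - ε - u' k) + min A (u' k) + max 0 (A - v' k)) := by
        rw [dimProfile, ← Finset.sum_sub_distrib]
        refine Finset.sum_le_sum fun k _ => ?_
        rw [← mul_sub]
        exact mul_le_mul_of_nonneg_left (sideProfile_sub_le (hu' k) (hv' k)) (hδ k)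

end DimensionalNumber

/-- The images under `φ` of boxes with half-sides at most `κ` have, up to the factor `K`, the
measure given by the product of the half-sides raised to the powers `δ i`. The upper bound is
stated for the subsets of closed boxes so that it also applies to images which are not
measurable. -/
structure IsBoxRegular {ι : Type*} [Fintype ι] {W : ι → Type*} [∀ i, MetricSpace (W i)]
    {Z : Type*} [MeasurableSpace Z] (m : Measure Z) (φ : (∀ i, W i) → Z) (δ : ι → ℝ)
    (κ K : ℝ) : Prop where
  pos : 0 < K
  le_measure : ∀ (y : ∀ i, W i) (a : ι → ℝ), (∀ i, 0 < a i) → (∀ i, a i ≤ κ) →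
    ENNReal.ofReal (K⁻¹ * ∏ i, a i ^ δ i) ≤ m (φ '' box y a)
  measure_le : ∀ (y : ∀ i, W i) (a : ι → ℝ) (S : Set (∀ i, W i)), (∀ i, 0 < a i) →
    (∀ i, a i ≤ κ) → S ⊆ closedBox y a → m (φ '' S) ≤ ENNReal.ofReal (K * ∏ i, a i ^ δ i)

section BoxRegularOfBilipschitz

variable {ι : Type*} [Fintype ι] {Y X : ι → Type*} [∀ i, MetricSpace (Y i)]
  [∀ i, MetricSpace (X i)] [∀ i, MeasurableSpace (Y i)] [∀ i, MeasurableSpace (X i)]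
  [∀ i, BorelSpace (Y i)] [∀ i, BorelSpace (X i)]
  [∀ i, SecondCountableTopology (Y i)] [∀ i, SecondCountableTopology (X i)]
  {ν : ∀ i, Measure (Y i)} {μ : ∀ i, Measure (X i)} [∀ i, IsFiniteMeasure (ν i)]
  [∀ i, IsFiniteMeasure (μ i)] {δ : ι → ℝ} {C L ε : ℝ}

theorem IsLocallyBilipschitz.isBoxRegular {φ : (∀ i, Y i) → ∀ i, X i}
    (hφ : IsLocallyBilipschitz φ L ε) (hC : 0 < C)
    (hν : ∀ i, IsRegularWith (ν i) (δ i) C) (hμ : ∀ i, IsRegularWith (μ i) (δ i) C) :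
    IsBoxRegular (Measure.pi μ) φ δ (min 1 (ε / 3))
      (C ^ Fintype.card ι * C ^ Fintype.card ι * (5 * L) ^ (∑ i, δ i) * C ^ Fintype.card ι) := by
  have hL := hφ.const_pos
  have hε := hφ.pos
  have hκε : 2 * min 1 (ε / 3) < ε := by linarith [min_le_right 1 (ε / 3)]
  have hdist : ∀ (y : ∀ i, Y i) (a : ι → ℝ), (∀ i, a i ≤ min 1 (ε / 3)) →
      ∀ x ∈ closedBox y a, ∀ x' ∈ closedBox y a, dist x x' < ε := fun y a ha x hx x' hx' =>
    (dist_le_of_mem_closedBox (by positivity) ha hx hx').trans_lt hκε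
  set K₀ := C ^ Fintype.card ι * C ^ Fintype.card ι * (5 * L) ^ (∑ i, δ i) with hK₀
  have hK₀0 : 0 < K₀ := by positivity
  refine ⟨by positivity, fun y a ha0 ha1 => ?_, fun y a S ha0 ha1 hS => ?_⟩
  · have hle := (le_measure_box hν y ha0 fun i => (ha1 i).trans (min_le_left _ _)).trans
      (hφ.measure_le_mul_measure_image (isRegularWith_pi hν) (isRegularWith_pi hμ)
        fun b hb c hc => hdist y a ha1 b (box_subset_closedBox hb) c (box_subset_closedBox hc))
    rw [← hK₀] at hle
    rw [mul_inv, mul_assoc, ENNReal.ofReal_mul (by positivity), ENNReal.ofReal_inv_of_pos hK₀0]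
    exact (ENNReal.inv_mul_le_iff (by simpa using hK₀0) ENNReal.ofReal_ne_top).2 hle
  · refine (hφ.measure_image_le_mul_measure (isRegularWith_pi hν) (isRegularWith_pi hμ)
      fun b hb c hc => hdist y a ha1 b (hS hb) c (hS hc)).trans ?_
    rw [mul_assoc K₀, ENNReal.ofReal_mul hK₀0.le, ← hK₀]
    gcongr
    exact (measure_mono hS).trans (measure_closedBox_le hν y ha0)

end BoxRegularOfBilipschitz

section ProductsOfPowers

variable {ι : Type*} [Fintype ι] {δ : ι → ℝ}

theorem prod_mul_min_rpow_le {r A s : ℝ} {a u v : ι → ℝ} (hr0 : 0 < r) (hr1 : r ≤ 1)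
    (h : s * A ≤ ∑ k, δ k * ((a k - u k) + min A (u k) + max 0 (A - v k))) :
    (∏ k, (r ^ a k) ^ δ k) * ∏ k, min (r ^ v k) (r ^ A) ^ δ k ≤
      (r ^ A) ^ (s - ∑ k, δ k) *
        ((∏ k, (r ^ v k) ^ δ k) * ∏ k, min (r ^ u k) (r ^ A) ^ δ k) := by
  have hmin : ∀ x, min (r ^ x) (r ^ A) = r ^ max x A := fun x =>
    ((Real.antitone_rpow_of_base_le_one hr0 hr1).map_max).symm
  simp only [hmin, ← Real.rpow_mul hr0.le]
  rw [← Real.rpow_sum_of_pos hr0, ← Real.rpow_sum_of_pos hr0, ← Real.rpow_sum_of_pos hr0,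
    ← Real.rpow_sum_of_pos hr0, ← Real.rpow_add hr0, ← Real.rpow_add hr0, ← Real.rpow_add hr0]
  refine Real.rpow_le_rpow_of_exponent_ge hr0 hr1 ?_
  have hterm : ∀ k, δ k * ((a k - u k) + min A (u k) + max 0 (A - v k)) =
      a k * δ k + max (v k) A * δ k - v k * δ k - max (u k) A * δ k + A * δ k := by
    intro k
    have hmin_u : min A (u k) = A + u k - max (u k) A := by
      rw [eq_sub_iff_add_eq, max_comm, min_add_max]
    have hmax_v : max 0 (A - v k) = max (v k) A - v k := by
      rw [← max_sub_sub_right, sub_self]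
    rw [hmin_u, hmax_v]
    ring
  simp only [hterm, Finset.sum_add_distrib, Finset.sum_sub_distrib, ← Finset.mul_sum] at h
  linarith

theorem prod_mul_min_rpow_le_of_le {r A₀ s ρ : ℝ} {a u v : ι → ℝ} (hr0 : 0 < r) (hr1 : r < 1)
    (h : ∀ A ≥ A₀, s * A ≤ ∑ k, δ k * ((a k - u k) + min A (u k) + max 0 (A - v k)))
    (hρ0 : 0 < ρ) (hρ : ρ ≤ r ^ A₀) :
    (∏ k, (r ^ a k) ^ δ k) * ∏ k, min (r ^ v k) ρ ^ δ k ≤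
      ρ ^ (s - ∑ k, δ k) * ((∏ k, (r ^ v k) ^ δ k) * ∏ k, min (r ^ u k) ρ ^ δ k) := by
  obtain ⟨A, rfl⟩ : ∃ A, r ^ A = ρ := ⟨Real.logb r ρ, Real.rpow_logb hr0 hr1.ne hρ0⟩
  exact prod_mul_min_rpow_le hr0 hr1.le
    (h A ((Real.rpow_le_rpow_left_iff_of_base_lt_one hr0 hr1).1 hρ))

theorem prod_mul_rpow {M : ℝ} (hM : 0 < M) {b : ι → ℝ} (hb : ∀ i, 0 < b i) :
    ∏ i, (M * b i) ^ δ i = M ^ (∑ i, δ i) * ∏ i, b i ^ δ i := by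
  rw [Real.rpow_sum_of_pos hM, ← Finset.prod_mul_distrib]
  exact Finset.prod_congr rfl fun i _ => Real.mul_rpow hM.le (hb i).le

theorem prod_div_rpow {M : ℝ} (hM : 0 < M) {b : ι → ℝ} (hb : ∀ i, 0 < b i) :
    ∏ i, (b i / M) ^ δ i = (M ^ ∑ i, δ i)⁻¹ * ∏ i, b i ^ δ i := by
  simp only [div_eq_inv_mul, prod_mul_rpow (inv_pos.2 hM) hb, Real.inv_rpow hM.le]

end ProductsOfPowers

section Spread

variable {ι : Type*} [Fintype ι] {W : ι → Type*} [∀ i, MetricSpace (W i)] {Z : Type*}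
  [MeasurableSpace Z] {m : Measure Z} {φ : (∀ i, W i) → Z} {δ b c : ι → ℝ}
  {L ε κ K ρ : ℝ} {ξ w : ∀ i, W i}

theorem IsBoxRegular.le_measure_image_box_div (hreg : IsBoxRegular m φ δ κ K) {M : ℝ}
    (hM : 1 ≤ M) (hb0 : ∀ i, 0 < b i) (hbκ : ∀ i, b i ≤ κ) :
    ENNReal.ofReal (K⁻¹ * ((M ^ ∑ i, δ i)⁻¹ * ∏ i, b i ^ δ i)) ≤
      m (φ '' box w fun i => b i / M) := by
  have hM0 : 0 < M := one_pos.trans_le hM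
  rw [← prod_div_rpow hM0 hb0]
  exact hreg.le_measure w _ (fun i => div_pos (hb0 i) hM0) fun i =>
    (div_le_self (hb0 i).le hM).trans (hbκ i)

variable [MetricSpace Z] {x : Z}

theorem IsBoxRegular.measure_ball_inter_image_box_le (hreg : IsBoxRegular m φ δ κ K)
    (hφ : IsLocallyBilipschitz φ L ε) (hκ : 0 ≤ κ) (hκε : 2 * κ < ε) (hδ : ∀ i, 0 ≤ δ i)
    (hb0 : ∀ i, 0 < b i) (hbκ : ∀ i, b i ≤ κ) (hρ : 0 < ρ) (hw : w ∈ box ξ fun i => b i / 2)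
    (hwx : φ w ∈ Metric.ball x ρ) :
    m (Metric.ball x ρ ∩ φ '' box ξ fun i => b i / 2) ≤
      ENNReal.ofReal (K * ((2 * L) ^ (∑ i, δ i) * ∏ i, min (b i) ρ ^ δ i)) := by
  have hL := hφ.one_le
  have hsub : (box ξ fun i => b i / 2) ∩ φ ⁻¹' Metric.ball x ρ ⊆
      closedBox w fun i => min (b i) (2 * L * ρ) := by
    rintro w' ⟨hw', hz⟩
    have hside : ∀ i, dist (w' i) (w i) ≤ b i := fun i => by
      linarith [dist_triangle_right (w' i) (w i) (ξ i), mem_box.1 hw' i, mem_box.1 hw i]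
    have hdist : dist w' w ≤ κ := (dist_pi_le_iff hκ).2 fun i => (hside i).trans (hbκ i)
    refine mem_closedBox.2 fun i => le_min (hside i) ?_
    calc dist (w' i) (w i) ≤ dist w' w := dist_le_pi_dist _ _ i
      _ ≤ L * dist (φ w') (φ w) := hφ.dist_le _ _ (by linarith)
      _ ≤ L * (ρ + ρ) := by
          gcongr
          exact (dist_triangle_right _ _ x).trans
            (add_le_add (Metric.mem_ball.1 hz).le (Metric.mem_ball.1 hwx).le)
      _ = 2 * L * ρ := by ring
  rw [inter_comm, ← image_inter_preimage]
  refine (hreg.measure_le w _ _ (fun i => lt_min (hb0 i) (by positivity))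
    (fun i => (min_le_left _ _).trans (hbκ i)) hsub).trans (ENNReal.ofReal_le_ofReal ?_)
  rw [← prod_mul_rpow (by positivity) fun i => lt_min (hb0 i) hρ]
  have hK := hreg.pos
  gcongr with i
  · exact fun i _ => Real.rpow_nonneg (le_min (hb0 i).le (by positivity)) _
  · exact le_min (hb0 i).le (by positivity)
  · exact hδ i
  · rw [mul_min_of_nonneg _ _ (by positivity)]
    exact min_le_min_right _ (le_mul_of_one_le_left (hb0 i).le (by linarith))

theorem IsBoxRegular.le_measure_image_box_inter_ball (hreg : IsBoxRegular m φ δ κ K)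
    (hφ : IsLocallyBilipschitz φ L ε) (hκ : 0 ≤ κ) (hκε : κ < ε) (hc0 : ∀ i, 0 < c i)
    (hcκ : ∀ i, c i ≤ κ) (hρ : 0 < ρ) (hw : w ∈ box ξ fun i => c i / 2)
    (hwx : φ w ∈ Metric.ball x ρ) :
    ENNReal.ofReal (K⁻¹ * (((2 * L) ^ ∑ i, δ i)⁻¹ * ∏ i, min (c i) ρ ^ δ i)) ≤
      m (φ '' box ξ c ∩ Metric.ball x (2 * ρ)) := by
  have hL := hφ.one_le
  have := hφ.const_pos
  refine (hreg.le_measure_image_box_div (w := w) (by linarith) (fun i => lt_min (hc0 i) hρ)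
    fun i => (min_le_left _ _).trans (hcκ i)).trans (measure_mono ?_)
  rintro _ ⟨w', hw', rfl⟩
  have hside : ∀ i, dist (w' i) (w i) < min (c i) ρ / (2 * L) := mem_box.1 hw'
  have hhalf : ∀ i, min (c i) ρ / (2 * L) ≤ c i / 2 := fun i =>
    div_le_div₀ (hc0 i).le (min_le_left _ _) two_pos (by linarith)
  have hdist_lt : dist w' w < ε := ((dist_pi_le_iff hκ).2 fun i => by
    linarith [hside i, hhalf i, hc0 i, hcκ i]).trans_lt hκε
  have hdist_le : dist w' w ≤ ρ / (2 * L) := (dist_pi_le_iff (by positivity)).2 fun i =>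
    (hside i).le.trans (by gcongr; exact min_le_right _ _)
  have himage : dist (φ w') (φ w) ≤ ρ / 2 :=
    calc dist (φ w') (φ w) ≤ L * dist w' w := hφ.dist_image_le _ _ hdist_lt
      _ ≤ L * (ρ / (2 * L)) := by gcongr
      _ = ρ / 2 := by field_simp
  refine ⟨mem_image_of_mem φ (mem_box.2 fun i => ?_), Metric.mem_ball.2 ?_⟩
  · linarith [dist_triangle (w' i) (w i) (ξ i), hside i, hhalf i, mem_box.1 hw i]
  · linarith [dist_triangle (φ w') (φ w) x, Metric.mem_ball.1 hwx]

theorem ofReal_mul_ofReal_le_of_mul_le {K M a p q q' t : ℝ} (hK : 0 < K) (hM : 0 < M)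
    (ha : 0 ≤ a) (ht : 0 ≤ t) (hp : 0 ≤ p) (h : a * q ≤ t * (p * q')) :
    ENNReal.ofReal (K * a) * ENNReal.ofReal (K * (M * q)) ≤
      ENNReal.ofReal (K ^ 4 * M ^ 3 * t) * ENNReal.ofReal (K⁻¹ * (M⁻¹ * p)) *
        ENNReal.ofReal (K⁻¹ * (M⁻¹ * q')) := by
  rw [← ENNReal.ofReal_mul (by positivity), ← ENNReal.ofReal_mul (by positivity),
    ← ENNReal.ofReal_mul (by positivity)]
  refine ENNReal.ofReal_le_ofReal ?_
  calc K * a * (K * (M * q)) = K ^ 2 * M * (a * q) := by ring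
    _ ≤ K ^ 2 * M * (t * (p * q')) := by gcongr
    _ = K ^ 4 * M ^ 3 * t * (K⁻¹ * (M⁻¹ * p)) * (K⁻¹ * (M⁻¹ * q')) := by field_simp

theorem IsBoxRegular.measure_mul_measure_ball_inter_le (hreg : IsBoxRegular m φ δ κ K)
    (hφ : IsLocallyBilipschitz φ L ε) (hκε : 2 * κ < ε) (hδ : ∀ i, 0 ≤ δ i)
    (hb0 : ∀ i, 0 < b i) (hbc : ∀ i, b i ≤ c i) (hcκ : ∀ i, c i ≤ κ) (hκ : 0 ≤ κ) {R : Set Z}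
    (hR : φ '' box ξ c ⊆ R) {p t : ℝ} (hp : 0 ≤ p) (hRm : m R ≤ ENNReal.ofReal (K * p))
    (hρ : 0 < ρ) (ht : 0 ≤ t)
    (h : p * ∏ i, min (b i) ρ ^ δ i ≤ t * ((∏ i, b i ^ δ i) * ∏ i, min (c i) ρ ^ δ i)) :
    m R * m (Metric.ball x ρ ∩ φ '' box ξ fun i => b i / 2) ≤
      ENNReal.ofReal (K ^ 4 * ((2 * L) ^ ∑ i, δ i) ^ 3 * t) *
        m (φ '' box ξ fun i => b i / 2) * m (R ∩ Metric.ball x (2 * ρ)) := by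
  obtain hempty | ⟨_, hwx, w, hw, rfl⟩ :=
    (Metric.ball x ρ ∩ φ '' box ξ fun i => b i / 2).eq_empty_or_nonempty
  · simp [hempty]
  have hL := hφ.one_le
  have := hφ.const_pos
  have hbκ : ∀ i, b i ≤ κ := fun i => (hbc i).trans (hcκ i)
  have hhalf : (box ξ fun i => b i / (2 * L)) ⊆ box ξ fun i => b i / 2 := fun y hy =>
    mem_box.2 fun i => (mem_box.1 hy i).trans_le
      (div_le_div_of_nonneg_left (hb0 i).le two_pos (by linarith))
  have hwc : w ∈ box ξ fun i => c i / 2 := mem_box.2 fun i => by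
    linarith [mem_box.1 hw i, hbc i]
  refine (mul_le_mul' hRm
    (hreg.measure_ball_inter_image_box_le hφ hκ hκε hδ hb0 hbκ hρ hw hwx)).trans
    ((ofReal_mul_ofReal_le_of_mul_le hreg.pos (by positivity) hp ht
      (Finset.prod_nonneg fun i _ => Real.rpow_nonneg (hb0 i).le _) h).trans ?_)
  gcongr
  · exact (hreg.le_measure_image_box_div (by linarith) hb0 hbκ).trans
      (measure_mono (image_mono hhalf))
  · exact (hreg.le_measure_image_box_inter_ball hφ hκ (by linarith)
      (fun i => (hb0 i).trans_le (hbc i)) hcκ hρ hwc hwx).trans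
      (measure_mono (inter_subset_inter_left _ hR))

theorem measure_mul_measure_ball_inter_le_of_dist_le {R P : Set Z} (hPR : P ⊆ R)
    (hR : ∀ z ∈ R, ∀ z' ∈ R, dist z z' ≤ ρ) {t : ℝ} (ht : 1 ≤ t) :
    m R * m (Metric.ball x ρ ∩ P) ≤
      ENNReal.ofReal t * m P * m (R ∩ Metric.ball x (2 * ρ)) := by
  obtain hempty | ⟨p, hpx, hpP⟩ := (Metric.ball x ρ ∩ P).eq_empty_or_nonempty
  · simp [hempty]
  have hRx : R ∩ Metric.ball x (2 * ρ) = R := inter_eq_left.2 fun z hz => by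
    rw [Metric.mem_ball] at hpx ⊢
    linarith [dist_triangle z p x, hR z hz p (hPR hpP)]
  rw [hRx, mul_comm]
  gcongr
  exact (measure_mono inter_subset_right).trans
    (le_mul_of_one_le_left zero_le (ENNReal.one_le_ofReal.2 ht))

end Spread

section Selection

variable {Z : Type*} [MeasurableSpace Z] {m : Measure Z} {R : ℕ → Set Z}

theorem exists_finset_measure_biUnion_le_two_mul [IsFiniteMeasure m] (R : ℕ → Set Z)
    (u : Set ℕ) :
    ∃ J : Finset ℕ, (J : Set ℕ) ⊆ u ∧ m (⋃ n ∈ u, R n) ≤ 2 * m (⋃ n ∈ J, R n) := by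
  classical
  obtain h0 | h0 := eq_or_ne (m (⋃ n ∈ u, R n)) 0
  · exact ⟨∅, by simp, by simp [h0]⟩
  let J (k : ℕ) : Finset ℕ := (Finset.range k).filter (· ∈ u)
  have hJ : ⋃ n ∈ u, R n = ⋃ k, ⋃ n ∈ J k, R n := by
    ext x
    simp only [mem_iUnion, exists_prop, J, Finset.mem_filter, Finset.mem_range]
    exact ⟨fun ⟨n, hn, hx⟩ => ⟨n + 1, n, ⟨n.lt_succ_self, hn⟩, hx⟩,
      fun ⟨_, n, ⟨_, hn⟩, hx⟩ => ⟨n, hn, hx⟩⟩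
  have hmono : Monotone fun k => ⋃ n ∈ J k, R n := fun k l hkl =>
    biUnion_subset_biUnion_left fun n hn =>
      Finset.filter_subset_filter _ (Finset.range_mono hkl) hn
  have hlt := ENNReal.half_lt_self h0 (measure_ne_top m _)
  conv_rhs at hlt => rw [hJ, hmono.measure_iUnion]
  obtain ⟨k, hk⟩ := lt_iSup_iff.1 hlt
  refine ⟨J k, fun n hn => (Finset.mem_filter.1 hn).2, ?_⟩
  rw [← ENNReal.div_le_iff' two_ne_zero ENNReal.ofNat_ne_top]
  exact hk.le

theorem exists_finset_pairwiseDisjoint_measure_biUnion_le [IsFiniteMeasure m]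
    {R' : ℕ → Set Z} {T : Set ℕ} {r : ℕ → ℝ} {H : ℝ≥0∞} (hmeas : ∀ n, MeasurableSet (R n))
    (hne : ∀ n, (R n).Nonempty) (hr0 : ∀ n ∈ T, 0 ≤ r n) (hr1 : ∀ n ∈ T, r n ≤ 1)
    (hsub : ∀ n ∈ T, ∀ b ∈ T, r n ≤ 2 * r b → (R n ∩ R b).Nonempty → R n ⊆ R' b)
    (hm : ∀ n ∈ T, m (R' n) ≤ H * m (R n)) :
    ∃ J : Finset ℕ, (J : Set ℕ) ⊆ T ∧ (J : Set ℕ).PairwiseDisjoint R ∧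
      m (⋃ n ∈ T, R n) ≤ H * 2 * m (⋃ n ∈ J, R n) := by
  obtain ⟨u, huT, hdisj, hcov⟩ := Vitali.exists_disjoint_subfamily_covering_enlargement R T r 2
    one_lt_two hr0 1 hr1 fun n _ => hne n
  obtain ⟨J, hJu, hJ⟩ := exists_finset_measure_biUnion_le_two_mul (m := m) R u
  refine ⟨J, hJu.trans huT, hdisj.subset hJu, ?_⟩
  have hcover : ⋃ n ∈ T, R n ⊆ ⋃ n ∈ u, R' n := iUnion₂_subset fun n hn => by
    obtain ⟨b, hb, hnb, hrnb⟩ := hcov n hn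
    exact (hsub n hn b (huT hb) hrnb hnb).trans (subset_biUnion_of_mem hb)
  calc m (⋃ n ∈ T, R n) ≤ ∑' n : u, m (R' n) :=
        (measure_mono hcover).trans (measure_biUnion_le _ u.to_countable _)
    _ ≤ ∑' n : u, H * m (R n) := ENNReal.tsum_le_tsum fun n => hm n (huT n.2)
    _ = H * m (⋃ n ∈ u, R n) := by
        rw [ENNReal.tsum_mul_left, measure_biUnion u.to_countable hdisj fun n _ => hmeas n]
    _ ≤ H * (2 * m (⋃ n ∈ J, R n)) := by gcongr
    _ = H * 2 * m (⋃ n ∈ J, R n) := by rw [mul_assoc]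

variable [PseudoMetricSpace Z]

theorem ae_frequently_mem_and_subset
    (hdiam : ∀ η > 0, ∀ᶠ n in atTop, ∀ x ∈ R n, ∀ x' ∈ R n, dist x x' ≤ η)
    (hcover : ∀ᵐ x ∂m, ∃ᶠ n in atTop, x ∈ R n) {G : Set Z} (hG : IsOpen G) :
    ∀ᵐ x ∂m, x ∈ G → ∃ᶠ n in atTop, x ∈ R n ∧ R n ⊆ G := by
  filter_upwards [hcover] with x hx hxG
  obtain ⟨η, hη, hball⟩ := Metric.isOpen_iff.1 hG x hxG
  refine (hx.and_eventually (hdiam (η / 2) (by positivity))).mono fun n hn => ⟨hn.1, ?_⟩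
  exact fun x' hx' => hball ((hn.2 x' hx' x hn.1).trans_lt (by linarith))

theorem fillsProportion_of_finite_cover {β : Type*} {t : Finset β} {S : β → Set ℕ} {H : ℝ≥0∞}
    (hdiam : ∀ η > 0, ∀ᶠ n in atTop, ∀ x ∈ R n, ∀ x' ∈ R n, dist x x' ≤ η)
    (hcover : ∀ᵐ x ∂m, ∃ᶠ n in atTop, x ∈ R n) (hS : ∀ᶠ n in atTop, ∃ z ∈ t, n ∈ S z)
    (hpack : ∀ z ∈ t, ∀ T ⊆ S z, ∃ J : Finset ℕ, (J : Set ℕ) ⊆ T ∧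
      (J : Set ℕ).PairwiseDisjoint R ∧ m (⋃ n ∈ T, R n) ≤ H * m (⋃ n ∈ J, R n)) :
    FillsProportion m R (t.card * H)⁻¹ := by
  intro G hG N
  let T (z : β) : Set ℕ := {n ∈ S z | N ≤ n ∧ R n ⊆ G}
  have hsum : m G ≤ ∑ z ∈ t, m (⋃ n ∈ T z, R n) := by
    refine le_trans (measure_mono_ae ?_) (measure_biUnion_finset_le _ _)
    filter_upwards [ae_frequently_mem_and_subset hdiam hcover hG] with x hx hxG
    obtain ⟨n, ⟨hxn, hnG⟩, ⟨z, hz, hnz⟩, hNn⟩ :=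
      ((hx hxG).and_eventually (hS.and (eventually_ge_atTop N))).exists
    exact mem_biUnion (x := z) hz (mem_biUnion (x := n) ⟨hnz, hNn, hnG⟩ hxn)
  obtain ⟨z₀, hz₀, -⟩ := hS.exists.choose_spec
  obtain ⟨z, hz, hmax⟩ := t.exists_max_image (fun z => m (⋃ n ∈ T z, R n)) ⟨z₀, hz₀⟩
  obtain ⟨J, hJT, hdisj, hJ⟩ := hpack z hz (T z) fun n hn => hn.1
  refine ⟨J, ⟨fun n hn => (hJT hn).2.1, fun n hn => (hJT hn).2.2, hdisj⟩, ?_⟩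
  rw [mul_comm, ← div_eq_mul_inv]
  refine ENNReal.div_le_of_le_mul ?_
  calc m G ≤ t.card • m (⋃ n ∈ T z, R n) := hsum.trans (Finset.sum_le_card_nsmul _ _ _ hmax)
    _ ≤ t.card • (H * m (⋃ n ∈ J, R n)) := by gcongr
    _ = m (⋃ n ∈ J, R n) * (t.card * H) := by rw [nsmul_eq_mul]; ring

end Selection

theorem tendsto_rpow_nhds_zero {r : ℕ → ℝ} (hr0 : Tendsto r atTop (nhds 0)) {a : ℝ}
    (ha : 0 < a) : Tendsto (fun n => r n ^ a) atTop (nhds 0) := by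
  simpa only [Real.zero_rpow ha.ne'] using hr0.rpow_const (p := a) (Or.inr ha.le)

theorem IsBoxRegular.measure_image_closedBox_mul_le {ι : Type*} [Fintype ι] {W : ι → Type*}
    [∀ i, MetricSpace (W i)] {Z : Type*} [MeasurableSpace Z] {m : Measure Z}
    {φ : (∀ i, W i) → Z} {δ a h : ι → ℝ} {κ K : ℝ} (hreg : IsBoxRegular m φ δ κ K)
    (hh : ∀ i, 1 ≤ h i) (ha0 : ∀ i, 0 < a i) (haκ : ∀ i, h i * a i ≤ κ) (y : ∀ i, W i) :
    m (φ '' closedBox y fun i => h i * a i) ≤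
      ENNReal.ofReal (K ^ 2 * ∏ i, h i ^ δ i) * m (φ '' closedBox y a) := by
  have hK := hreg.pos
  have hh0 (i : ι) : 0 < h i := one_pos.trans_le (hh i)
  have hprod : 0 ≤ ∏ i, h i ^ δ i := Finset.prod_nonneg fun i _ => Real.rpow_nonneg (hh0 i).le _
  calc m (φ '' closedBox y fun i => h i * a i)
      ≤ ENNReal.ofReal (K * ∏ i, (h i * a i) ^ δ i) :=
        hreg.measure_le y _ _ (fun i => mul_pos (hh0 i) (ha0 i)) haκ subset_rfl
    _ = ENNReal.ofReal (K ^ 2 * ∏ i, h i ^ δ i) * ENNReal.ofReal (K⁻¹ * ∏ i, a i ^ δ i) := by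
        rw [← ENNReal.ofReal_mul (by positivity),
          Finset.prod_congr rfl fun i _ => Real.mul_rpow (hh0 i).le (ha0 i).le,
          Finset.prod_mul_distrib]
        congr 1
        field_simp
    _ ≤ ENNReal.ofReal (K ^ 2 * ∏ i, h i ^ δ i) * m (φ '' closedBox y a) := by
        gcongr
        exact (hreg.le_measure y a ha0 fun i =>
          (le_mul_of_one_le_left (ha0 i).le (hh i)).trans (haκ i)).trans
          (measure_mono (image_mono box_subset_closedBox))

section Filling

variable {ι : Type*} [Fintype ι] {W : ι → Type*} [∀ i, MetricSpace (W i)] {Z : Type*}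
  [MetricSpace Z] {φ : (∀ i, W i) → Z} {δ a : ι → ℝ} {L ε κ K : ℝ}

theorem IsLocallyBilipschitz.image_closedBox_subset_of_inter_nonempty
    (hφ : IsLocallyBilipschitz φ L ε) {b : ι → ℝ} {y y' : ∀ i, W i} (hyy' : dist y y' ≤ ε / 4)
    (ha : ∀ i, a i ≤ ε / 8) (hb : ∀ i, b i ≤ ε / 8)
    (h : (φ '' closedBox y a ∩ φ '' closedBox y' b).Nonempty) :
    φ '' closedBox y a ⊆ φ '' closedBox y' fun i => b i + 2 * a i := by
  obtain ⟨_, ⟨x, hx, rfl⟩, x', hx', hφx⟩ := h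
  have hε := hφ.pos
  rw [mem_closedBox] at hx hx'
  have hdist : dist x' x ≤ ε / 2 := (dist_pi_le_iff (by positivity)).2 fun i => by
    linarith [dist_le_pi_dist y y' i, dist_triangle (x' i) (y' i) (x i),
      dist_triangle_left (y' i) (x i) (y i), dist_comm (y i) (x i), hx i, hx' i, ha i, hb i]
  obtain rfl : x' = x := dist_le_zero.1 <| by
    simpa [hφx] using hφ.dist_le x' x (hdist.trans_lt (by linarith))
  refine image_mono fun z hz => mem_closedBox.2 fun i => ?_
  linarith [dist_triangle (z i) (x' i) (y' i), dist_triangle_right (z i) (x' i) (y i),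
    mem_closedBox.1 hz i, hx i, hx' i]

theorem IsLocallyBilipschitz.isClosed_image_closedBox [∀ i, CompactSpace (W i)]
    (hφ : IsLocallyBilipschitz φ L ε) (y : ∀ i, W i) (a : ι → ℝ) :
    IsClosed (φ '' closedBox y a) :=
  (isClosed_closedBox.isCompact.image hφ.continuous).isClosed

theorem IsLocallyBilipschitz.eventually_dist_image_closedBox_le
    (hφ : IsLocallyBilipschitz φ L ε) (y : ℕ → ∀ i, W i) {b : ℕ → ι → ℝ}
    (hb : ∀ i, Tendsto (fun n => b n i) atTop (nhds 0)) {η : ℝ} (hη : 0 < η) :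
    ∀ᶠ n in atTop, ∀ x ∈ φ '' closedBox (y n) (b n), ∀ x' ∈ φ '' closedBox (y n) (b n),
      dist x x' ≤ η := by
  have hL := hφ.const_pos
  have hε := hφ.pos
  have hsmall : 0 < min (ε / 3) (η / (2 * L)) := by positivity
  filter_upwards [eventually_all.2 fun i => (hb i).eventually_le_const hsmall] with n hn
  rintro _ ⟨x, hx, rfl⟩ _ ⟨x', hx', rfl⟩
  have hxx' := dist_le_of_mem_closedBox hsmall.le hn hx hx'
  calc dist (φ x) (φ x') ≤ L * dist x x' :=
        hφ.dist_image_le x x' (by linarith [min_le_left (ε / 3) (η / (2 * L))])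
    _ ≤ L * (2 * (η / (2 * L))) := by
        gcongr
        exact hxx'.trans (by gcongr; exact min_le_right _ _)
    _ = η := by field_simp

variable [∀ i, CompactSpace (W i)] [MeasurableSpace Z] [BorelSpace Z] {m : Measure Z}
  [IsFiniteMeasure m]

theorem IsBoxRegular.exists_finset_measure_biUnion_image_closedBox_le
    (hreg : IsBoxRegular m φ δ κ K) (hφ : IsLocallyBilipschitz φ L ε) (ha : ∀ i, 0 ≤ a i)
    {r : ℕ → ℝ} (hr : ∀ n, 0 < r n) {y : ℕ → ∀ i, W i} {T : Set ℕ} (hr1 : ∀ n ∈ T, r n ≤ 1)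
    (hrε : ∀ n ∈ T, ∀ i, r n ^ a i ≤ ε / 8)
    (hrκ : ∀ n ∈ T, ∀ i, (1 + 2 * 2 ^ a i) * r n ^ a i ≤ κ)
    (hy : ∀ n ∈ T, ∀ b ∈ T, dist (y n) (y b) ≤ ε / 4) :
    ∃ J : Finset ℕ, (J : Set ℕ) ⊆ T ∧
      (J : Set ℕ).PairwiseDisjoint (fun n => φ '' closedBox (y n) fun i => r n ^ a i) ∧
      m (⋃ n ∈ T, φ '' closedBox (y n) fun i => r n ^ a i) ≤
        ENNReal.ofReal (K ^ 2 * ∏ i, (1 + 2 * 2 ^ a i) ^ δ i) * 2 *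
          m (⋃ n ∈ J, φ '' closedBox (y n) fun i => r n ^ a i) := by
  have hpos (n : ℕ) (i : ι) : 0 < r n ^ a i := Real.rpow_pos_of_pos (hr n) _
  refine exists_finset_pairwiseDisjoint_measure_biUnion_le
    (R' := fun n => φ '' closedBox (y n) fun i => (1 + 2 * 2 ^ a i) * r n ^ a i)
    (fun n => (hφ.isClosed_image_closedBox _ _).measurableSet)
    (fun n => ⟨φ (y n), mem_image_of_mem φ (box_subset_closedBox (mem_box_self (hpos n)))⟩)
    (fun n _ => (hr n).le) hr1 (fun n hn b hb hnb hinter => ?_) fun n hn => ?_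
  · refine (hφ.image_closedBox_subset_of_inter_nonempty (hy n hn b hb) (hrε n hn) (hrε b hb)
      hinter).trans (image_mono (closedBox_mono fun i => ?_))
    have : r n ^ a i ≤ 2 ^ a i * r b ^ a i := by
      rw [← Real.mul_rpow two_pos.le (hr b).le]
      exact Real.rpow_le_rpow (hr n).le hnb (ha i)
    linarith
  · refine hreg.measure_image_closedBox_mul_le (fun i => ?_) (hpos n) (hrκ n hn) (y n)
    exact le_add_of_nonneg_right (by positivity)

theorem IsBoxRegular.exists_fillsProportion (hreg : IsBoxRegular m φ δ κ K)
    (hφ : IsLocallyBilipschitz φ L ε) (hκ : 0 < κ) (ha : ∀ i, 0 < a i) {r : ℕ → ℝ}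
    (hr : ∀ n, 0 < r n) (hr0 : Tendsto r atTop (nhds 0)) {y : ℕ → ∀ i, W i}
    (hcover : ∀ᵐ x ∂m, ∃ᶠ n in atTop, x ∈ φ '' closedBox (y n) fun i => r n ^ a i) :
    ∃ c > 0, FillsProportion m (fun n => φ '' closedBox (y n) fun i => r n ^ a i) c := by
  have hε := hφ.pos
  have hlim (i : ι) := tendsto_rpow_nhds_zero hr0 (ha i)
  have hsmall : ∀ᶠ n in atTop, r n ≤ 1 ∧ (∀ i, r n ^ a i ≤ ε / 8) ∧
      ∀ i, (1 + 2 * 2 ^ a i) * r n ^ a i ≤ κ := by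
    refine (hr0.eventually_le_const one_pos).and <|
      (eventually_all.2 fun i => ?_).and (eventually_all.2 fun i => ?_)
    · exact (hlim i).eventually_le_const (by positivity)
    · have hlim' := (hlim i).const_mul (1 + 2 * 2 ^ a i)
      rw [mul_zero] at hlim'
      exact hlim'.eventually_le_const hκ
  -- Vitali's lemma needs charts, so the centres are sorted into finitely many small cells.
  obtain ⟨t, -, ht, hcells⟩ := (isCompact_univ (X := ∀ i, W i)).finite_cover_balls
    (by positivity : 0 < ε / 8)
  let S (z : ∀ i, W i) : Set ℕ := {n | dist (y n) z < ε / 8 ∧ r n ≤ 1 ∧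
    (∀ i, r n ^ a i ≤ ε / 8) ∧ ∀ i, (1 + 2 * 2 ^ a i) * r n ^ a i ≤ κ}
  refine ⟨_, ?_, fillsProportion_of_finite_cover (t := ht.toFinset) (S := S)
    (H := ENNReal.ofReal (K ^ 2 * ∏ i, (1 + 2 * 2 ^ a i) ^ δ i) * 2)
    (fun η => hφ.eventually_dist_image_closedBox_le y hlim) hcover ?_ fun z _ T hT => ?_⟩
  · exact ENNReal.inv_pos.2 (by finiteness)
  · filter_upwards [hsmall] with n hn
    obtain ⟨z, hz, hnz⟩ := mem_iUnion₂.1 (hcells (mem_univ (y n)))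
    exact ⟨z, ht.mem_toFinset.2 hz, hnz, hn⟩
  · exact hreg.exists_finset_measure_biUnion_image_closedBox_le hφ (fun i => (ha i).le) hr
      (fun n hn => (hT hn).2.1) (fun n hn => (hT hn).2.2.1) (fun n hn => (hT hn).2.2.2)
      fun n hn b hb => by
        linarith [dist_triangle_right (y n) (y b) z, (hT hn).1, (hT hb).1]

end Filling

theorem mul_rpow_le_rpow_of_log_div_le {c r u a η : ℝ} (hc : 0 < c) (hr0 : 0 < r) (hr1 : r < 1)
    (h : Real.log c / (-Real.log r) ≤ η) (ha : a ≤ u - η) : c * r ^ u ≤ r ^ a := by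
  have hlog : 0 < -Real.log r := neg_pos.2 (Real.log_neg hr0 hr1)
  have hcr : c ≤ r ^ (-η) := by
    rw [← Real.log_le_log_iff hc (Real.rpow_pos_of_pos hr0 _), Real.log_rpow hr0]
    linarith [(div_le_iff₀ hlog).1 h]
  calc c * r ^ u ≤ r ^ (-η) * r ^ u := by gcongr
    _ = r ^ (-η + u) := (Real.rpow_add hr0 _ _).symm
    _ ≤ r ^ a := Real.rpow_le_rpow_of_exponent_ge hr0 hr1.le (by linarith)

theorem eventually_le_toReal_add {v : ℕ → ℝ} {w : ℝ≥0∞} (hw : w ≠ ⊤)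
    (hv : Tendsto (fun n => ENNReal.ofReal (v n)) atTop (nhds w)) {η : ℝ} (hη : 0 < η) :
    ∀ᶠ n in atTop, v n ≤ w.toReal + η := by
  have hlt : w < ENNReal.ofReal (w.toReal + η) := by
    rw [ENNReal.lt_ofReal_iff_toReal_lt hw]
    linarith
  filter_upwards [hv.eventually_lt_const hlt] with n hn
  exact ((ENNReal.ofReal_lt_ofReal_iff (by positivity)).1 hn).le

theorem ae_frequently_mem_of_measure_limsup {Z : Type*} [MeasurableSpace Z] {m : Measure Z}
    [IsFiniteMeasure m] {S : ℕ → Set Z} (hS : ∀ n, MeasurableSet (S n))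
    (h : m (atTop.limsup S) = m univ) : ∀ᵐ x ∂m, ∃ᶠ n in atTop, x ∈ S n := by
  filter_upwards [(ae_iff_measure_eq
    (MeasurableSet.measurableSet_limsup hS).nullMeasurableSet).2 h] with x hx
  exact mem_limsup_iff_frequently_mem.1 hx

/-- The conditions on one scale `r` under which the rectangle with sides `r ^ v k`, inside the
rectangle with sides `r ^ u k`, inside the chart rectangle with sides `r ^ a k`, carries the mass
of the latter with Frostman exponent `s`. Radii above `r ^ A₀` exceed the diameter of the chart
rectangle; for the radii `r ^ A` below it, `mul_le_sum` is the exponent inequality to be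
satisfied. -/
structure IsAdmissibleScale {ι : Type*} [Fintype ι] (δ : ι → ℝ) (L κ A₀ s r : ℝ)
    (a u v : ι → ℝ) : Prop where
  pos : 0 < r
  lt_one : r < 1
  two_mul_rpow_le : 2 * L * r ^ A₀ ≤ 1
  two_mul_le : ∀ k, 2 * A₀ ≤ a k
  chart_le : ∀ k, a k ≤ u k
  le : ∀ k, u k ≤ v k
  rpow_le : ∀ k, r ^ a k ≤ κ
  mul_le_sum : ∀ A ≥ A₀, s * A ≤ ∑ k, δ k * ((a k - u k) + min A (u k) + max 0 (A - v k))

namespace IsAdmissibleScale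

variable {ι : Type*} [Fintype ι] {δ a u v : ι → ℝ} {L κ A₀ s r : ℝ}

theorem rpow_outer_le (h : IsAdmissibleScale δ L κ A₀ s r a u v) (k : ι) : r ^ u k ≤ κ :=
  (Real.rpow_le_rpow_of_exponent_ge h.pos h.lt_one.le (h.chart_le k)).trans (h.rpow_le k)

theorem rpow_inner_le_rpow_outer (h : IsAdmissibleScale δ L κ A₀ s r a u v) (k : ι) :
    r ^ v k ≤ r ^ u k :=
  Real.rpow_le_rpow_of_exponent_ge h.pos h.lt_one.le (h.le k)

theorem rpow_inner_half_le (h : IsAdmissibleScale δ L κ A₀ s r a u v) (k : ι) :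
    r ^ v k / 2 ≤ r ^ u k :=
  (half_le_self (Real.rpow_nonneg h.pos.le _)).trans (h.rpow_inner_le_rpow_outer k)

variable {W : ι → Type*} [∀ i, MetricSpace (W i)] {Z : Type*} [MetricSpace Z]
  {g φ : (∀ i, W i) → Z} {ε K : ℝ} {y ξ : ∀ i, W i}

theorem dist_image_closedBox_le (h : IsAdmissibleScale δ L κ A₀ s r a u v)
    (hg : IsLocallyBilipschitz g L ε) (hκ : 0 ≤ κ) (hκε : 2 * κ < ε) {z z' : Z}
    (hz : z ∈ g '' closedBox y fun k => r ^ a k) (hz' : z' ∈ g '' closedBox y fun k => r ^ a k) :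
    dist z z' ≤ r ^ A₀ := by
  obtain ⟨x, hx, rfl⟩ := hz
  obtain ⟨x', hx', rfl⟩ := hz'
  have hL := hg.const_pos
  have hpow := Real.rpow_pos_of_pos h.pos A₀
  have hxx' : dist x x' ≤ 2 * r ^ (2 * A₀) :=
    dist_le_of_mem_closedBox (Real.rpow_nonneg h.pos.le _) (fun k =>
      Real.rpow_le_rpow_of_exponent_ge h.pos h.lt_one.le (h.two_mul_le k)) hx hx'
  calc dist (g x) (g x') ≤ L * dist x x' := hg.dist_image_le x x'
        ((dist_le_of_mem_closedBox hκ h.rpow_le hx hx').trans_lt hκε)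
    _ ≤ L * (2 * r ^ (2 * A₀)) := by gcongr
    _ = 2 * L * r ^ A₀ * r ^ A₀ := by rw [two_mul A₀, Real.rpow_add h.pos]; ring
    _ ≤ r ^ A₀ := mul_le_of_le_one_left hpow.le h.two_mul_rpow_le

theorem measure_mul_measure_ball_inter_le [MeasurableSpace Z] {m : Measure Z}
    (h : IsAdmissibleScale δ L κ A₀ s r a u v) (hφ : IsLocallyBilipschitz φ L ε)
    (hφreg : IsBoxRegular m φ δ κ K) (hg : IsLocallyBilipschitz g L ε)
    (hgreg : IsBoxRegular m g δ κ K) (hκ : 0 ≤ κ) (hκε : 2 * κ < ε) (hδ : ∀ i, 0 ≤ δ i)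
    (hs : s ≤ ∑ i, δ i) (hsub : (φ '' box ξ fun k => r ^ u k) ⊆ g '' closedBox y fun k => r ^ a k)
    {C : ℝ} (hC1 : 1 ≤ C) (hC : K ^ 4 * ((2 * L) ^ ∑ i, δ i) ^ 3 ≤ C) (x : Z) {ρ : ℝ}
    (hρ0 : 0 < ρ) (hρ1 : ρ ≤ 1) :
    m (g '' closedBox y fun k => r ^ a k) *
        m (Metric.ball x ρ ∩ φ '' box ξ fun k => r ^ v k / 2) ≤
      ENNReal.ofReal (C * ρ ^ (s - ∑ i, δ i)) * m (φ '' box ξ fun k => r ^ v k / 2) *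
        m ((g '' closedBox y fun k => r ^ a k) ∩ Metric.ball x (2 * ρ)) := by
  have hpos (b : ℝ) : 0 < r ^ b := Real.rpow_pos_of_pos h.pos b
  obtain hρ | hρ := le_total ρ (r ^ A₀)
  · refine (hφreg.measure_mul_measure_ball_inter_le hφ hκε hδ (fun k => hpos (v k))
      h.rpow_inner_le_rpow_outer h.rpow_outer_le hκ hsub
      (Finset.prod_nonneg fun k _ => Real.rpow_nonneg (hpos (a k)).le (δ k))
      (hgreg.measure_le y _ _ (fun k => hpos (a k)) h.rpow_le subset_rfl) hρ0
      (Real.rpow_nonneg hρ0.le _)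
      (prod_mul_min_rpow_le_of_le h.pos h.lt_one h.mul_le_sum hρ0 hρ)).trans ?_
    gcongr
  · refine measure_mul_measure_ball_inter_le_of_dist_le
      ((image_mono (pi_mono fun k _ => Metric.ball_subset_ball (h.rpow_inner_half_le k))).trans
        hsub)
      (fun z hz z' hz' => (h.dist_image_closedBox_le hg hκ hκε hz hz').trans hρ) ?_
    exact one_le_mul_of_one_le_of_one_le hC1
      (Real.one_le_rpow_of_pos_of_le_one_of_nonpos hρ0 hρ1 (sub_nonpos.2 hs))

end IsAdmissibleScale

section Assembly

variable {ι : Type*} [Fintype ι] {W : ι → Type*} [∀ i, MetricSpace (W i)]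
  [∀ i, CompactSpace (W i)] {Z : Type*} [MetricSpace Z] [MeasurableSpace Z] [BorelSpace Z]
  {m : Measure Z} [IsFiniteMeasure m] {f : ℕ → (∀ i, W i) → Z} {g : (∀ i, W i) → Z}
  {δ a : ι → ℝ} {u v : ℕ → ι → ℝ} {r : ℕ → ℝ} {L ε κ K C A₀ s : ℝ} {ξ : ℕ → ∀ i, W i}

theorem exists_isTransferSystem_image_box (hf : ∀ n, IsLocallyBilipschitz (f n) L ε)
    (hfreg : ∀ n, IsBoxRegular m (f n) δ κ K) (hg : IsLocallyBilipschitz g L ε)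
    (hgreg : IsBoxRegular m g δ κ K) (hκ : 0 < κ) (hκε : 2 * κ < ε) (hδ : ∀ i, 0 ≤ δ i)
    (hm : IsFrostman m (∑ i, δ i) C) (hs : s ≤ ∑ i, δ i) (hA₀ : 0 < A₀)
    (hr0 : Tendsto r atTop (nhds 0))
    (hscale : ∀ n, IsAdmissibleScale δ L κ A₀ s (r n) a (u n) (v n)) {y : ℕ → ∀ i, W i}
    (hsub : ∀ n, (f n '' box (ξ n) fun i => r n ^ u n i) ⊆
      g '' closedBox (y n) fun i => r n ^ a i)
    (hcover : ∀ᵐ x ∂m, ∃ᶠ n in atTop, x ∈ f n '' box (ξ n) fun i => r n ^ u n i) :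
    ∃ C' c, IsTransferSystem m (fun n => g '' closedBox (y n) fun i => r n ^ a i)
      (fun n => f n '' box (ξ n) fun i => r n ^ v n i / 2)
      (fun n => f n '' box (ξ n) fun i => r n ^ v n i) s (∑ i, δ i) C' c := by
  have ha (i : ι) : 0 < a i := by linarith [(hscale 0).two_mul_le i]
  have hrv (n : ℕ) (i : ι) : 0 < r n ^ v n i := Real.rpow_pos_of_pos (hscale n).pos _
  obtain ⟨c, hc, hfill⟩ := hgreg.exists_fillsProportion hg hκ ha (fun n => (hscale n).pos) hr0
    (hcover.mono fun x hx => hx.mono fun n hn => hsub n hn)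
  set C' := max (max 1 C) (K ^ 4 * ((2 * L) ^ ∑ i, δ i) ^ 3)
  have hC' : 1 ≤ C' := (le_max_left _ _).trans (le_max_left _ _)
  refine ⟨C', c, {
    isClosed := fun n => hg.isClosed_image_closedBox _ _
    isOpen := fun n => (hf n).isOpenMap _ isOpen_box
    subset := fun n => (image_mono (pi_mono fun i _ =>
      Metric.ball_subset_ball ((hscale n).rpow_inner_half_le i))).trans (hsub n)
    closure_subset := fun n => ?_
    measure_ne_zero := fun n => ?_
    dist_le := fun η =>
      hg.eventually_dist_image_closedBox_le y fun i => tendsto_rpow_nhds_zero hr0 (ha i)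
    pos_const := one_pos.trans_le hC'
    isFrostman := hm.mono_const ((le_max_right _ _).trans (le_max_left _ _))
    spread := fun n x ρ hρ0 hρ1 => (hscale n).measure_mul_measure_ball_inter_le (hf n) (hfreg n)
      hg hgreg hκ.le hκε hδ hs (hsub n) hC' (le_max_right _ _) x hρ0 hρ1
    pos_filling := hc
    filling := hfill }⟩
  · refine (closure_minimal (image_mono box_subset_closedBox)
      ((hf n).isClosed_image_closedBox _ _)).trans (image_mono (pi_mono fun i _ => ?_))
    exact Metric.closedBall_subset_ball (half_lt_self (hrv n i))
  · have hpos := (hfreg n).pos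
    refine ((ENNReal.ofReal_pos.2 ?_).trans_le ((hfreg n).le_measure (ξ n) _
      (fun i => half_pos (hrv n i)) fun i =>
        ((hscale n).rpow_inner_half_le i).trans ((hscale n).rpow_outer_le i))).ne'
    exact mul_pos (inv_pos.2 hpos) (Finset.prod_pos fun i _ =>
      Real.rpow_pos_of_pos (half_pos (hrv n i)) _)

theorem ofReal_le_dimH_limsup_image_box [CompactSpace Z]
    (hf : ∀ n, IsLocallyBilipschitz (f n) L ε) (hfreg : ∀ n, IsBoxRegular m (f n) δ κ K)
    (hg : IsLocallyBilipschitz g L ε) (hgreg : IsBoxRegular m g δ κ K) (hκ : 0 < κ)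
    (hκε : 2 * κ < ε) (hδ : ∀ i, 0 ≤ δ i) (hm : IsFrostman m (∑ i, δ i) C) (hm0 : m univ ≠ 0)
    (hs : s ≤ ∑ i, δ i) (hA₀ : 0 < A₀) (hr0 : Tendsto r atTop (nhds 0))
    (hscale : ∀ᶠ n in atTop, IsAdmissibleScale δ L κ A₀ s (r n) a (u n) (v n))
    (hsub : ∀ᶠ n in atTop, ∃ y, (f n '' box (ξ n) fun i => r n ^ u n i) ⊆
      g '' closedBox y fun i => r n ^ a i)
    (hfull : m (atTop.limsup fun n => f n '' box (ξ n) fun i => r n ^ u n i) = m univ)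
    {t : ℝ} (ht : 0 < t) (hts : t < s) :
    ENNReal.ofReal t ≤ dimH (atTop.limsup fun n => f n '' box (ξ n) fun i => r n ^ v n i) := by
  obtain ⟨N, hN⟩ := eventually_atTop.1 (hscale.and hsub)
  choose hscale y hsub using fun n => hN (n + N) (Nat.le_add_left N n)
  rw [← limsup_nat_add _ N] at hfull ⊢
  obtain ⟨C', c, hsystem⟩ := exists_isTransferSystem_image_box (fun n => hf (n + N))
    (fun n => hfreg (n + N)) hg hgreg hκ hκε hδ hm hs hA₀
    ((tendsto_add_atTop_iff_nat N).2 hr0) hscale hsub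
    (ae_frequently_mem_of_measure_limsup
      (fun n => ((hf (n + N)).isOpenMap _ isOpen_box).measurableSet) hfull)
  exact hsystem.le_dimH_limsup hm0 ht hts (hts.le.trans hs)

end Assembly

theorem ofReal_le_of_forall_pos_lt {s : ℝ} {x : ℝ≥0∞}
    (h : ∀ t, 0 < t → t < s → ENNReal.ofReal t ≤ x) : ENNReal.ofReal s ≤ x := by
  refine le_of_forall_lt_imp_le_of_dense fun b hb => ?_
  have hbtop : b ≠ ⊤ := (hb.trans ENNReal.ofReal_lt_top).ne
  obtain rfl | hb0 := eq_or_ne b 0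
  · exact zero_le
  rw [← ENNReal.ofReal_toReal hbtop]
  exact h _ (ENNReal.toReal_pos hb0 hbtop) ((ENNReal.lt_ofReal_iff_toReal_lt hbtop).1 hb)

theorem exists_margins {ι : Type*} [Finite ι] {u : ι → ℝ} (hu : ∀ i, 0 < u i) {σ D : ℝ}
    (hσ : 0 < σ) (hD : 0 < D) :
    ∃ A₀ > 0, ∃ e > 0, (∀ i, 2 * A₀ ≤ u i - e) ∧ 4 * D * e ≤ σ * A₀ := by
  have hsmall : ∀ᶠ A in nhdsWithin (0 : ℝ) (Ioi 0), ∀ i, A < u i :=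
    eventually_all.2 fun i => eventually_nhdsWithin_of_eventually_nhds (eventually_lt_nhds (hu i))
  obtain ⟨A, hA, hA0⟩ := (hsmall.and self_mem_nhdsWithin).exists
  have : 0 < A := hA0
  refine ⟨A / 4, by positivity, min (A / 2) (σ * (A / 4) / (4 * D)), by positivity,
    fun i => ?_, ?_⟩
  · linarith [hA i, min_le_left (A / 2) (σ * (A / 4) / (4 * D))]
  · rw [← le_div_iff₀' (by positivity)]
    exact min_le_right _ _

section Limits

variable {δ ulim : Fin d → ℝ} {vlim : Fin d → ℝ≥0∞} {u v : Fin d → ℕ → ℝ} {r : ℕ → ℝ} {A₀ e : ℝ}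

theorem eventually_isAdmissibleScale (hd : 1 ≤ d) (hδ : ∀ k, 0 ≤ δ k) (hrpos : ∀ n, 0 < r n)
    (hr0 : Tendsto r atTop (nhds 0)) (hvlim : ∀ k, 0 < vlim k)
    (hv : ∀ k, Tendsto (fun n => ENNReal.ofReal (v k n)) atTop (nhds (vlim k)))
    (huv : ∀ k n, u k n ≤ v k n) (hu : ∀ k, Tendsto (u k) atTop (nhds (ulim k)))
    (huvlim : ∀ k, ENNReal.ofReal (ulim k) ≤ vlim k) (L : ℝ) {κ : ℝ} (hκ : 0 < κ)
    (hA₀ : 0 < A₀) (he : 0 < e) (hA₀e : ∀ k, 2 * A₀ ≤ ulim k - e) {s : ℝ}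
    (hs : s ≤ dimNum δ ulim vlim)
    (hes : 4 * (∑ k, δ k) * e ≤ (dimNum δ ulim vlim - s) * A₀) :
    ∀ᶠ n in atTop, IsAdmissibleScale δ L κ A₀ s (r n) (fun k => ulim k - e)
      (fun k => u k n) fun k => v k n := by
  have hL : ∀ᶠ n in atTop, 2 * L * r n ^ A₀ ≤ 1 := by
    have hlim := (tendsto_rpow_nhds_zero hr0 hA₀).const_mul (2 * L)
    rw [mul_zero] at hlim
    exact hlim.eventually_le_const one_pos
  have hrκ : ∀ᶠ n in atTop, ∀ k, r n ^ (ulim k - e) ≤ κ := eventually_all.2 fun k =>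
    (tendsto_rpow_nhds_zero hr0 (by linarith [hA₀e k])).eventually_le_const hκ
  have hue : ∀ᶠ n in atTop, ∀ k, |u k n - ulim k| ≤ e := eventually_all.2 fun k => by
    simpa only [Metric.mem_closedBall, Real.dist_eq] using
      (hu k).eventually_mem (Metric.closedBall_mem_nhds _ he)
  have hve : ∀ᶠ n in atTop, ∀ k, vlim k ≠ ⊤ → v k n ≤ (vlim k).toReal + e :=
    eventually_all.2 fun k => eventually_imp_distrib_left.2 fun hk =>
      eventually_le_toReal_add hk (hv k) he
  filter_upwards [hr0.eventually_lt_const one_pos, hL, hrκ, hue, hve] with n h1 hL hrκ hue hve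
  exact
  { pos := hrpos n
    lt_one := h1
    two_mul_rpow_le := hL
    two_mul_le := hA₀e
    chart_le := fun k => by linarith [neg_le_of_abs_le (hue k)]
    le := fun k => huv k n
    rpow_le := hrκ
    mul_le_sum := fun A hA => mul_le_sum_of_abs_sub_le hd hδ
      (fun k => by linarith [hA₀e k]) hvlim huvlim hA₀.le hA hs hes hue hve }

theorem eventually_mul_rpow_le_rpow_sub (hrpos : ∀ n, 0 < r n) (hr0 : Tendsto r atTop (nhds 0))
    (hu : ∀ k, Tendsto (u k) atTop (nhds (ulim k))) {c : ℕ → ℝ} (hc : ∀ n, 0 < c n)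
    (hclog : Tendsto (fun n => Real.log (c n) / (-Real.log (r n))) atTop (nhds 0))
    (he : 0 < e) : ∀ᶠ n in atTop, ∀ k, c n * r n ^ u k n ≤ r n ^ (ulim k - e) := by
  refine eventually_all.2 fun k => ?_
  filter_upwards [hr0.eventually_lt_const one_pos, hclog.eventually_le_const (half_pos he),
    (hu k).eventually_const_le (show ulim k - e / 2 < ulim k by linarith)] with n h1 hlog huk
  exact mul_rpow_le_rpow_of_log_div_le (hc n) (hrpos n) h1 hlog (by linarith)

end Limits

theorem IsRegularWith.measure_univ_ne_zero {Z : Type*} [MetricSpace Z] [MeasurableSpace Z]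
    [Nonempty Z] {m : Measure Z} {D C : ℝ} (h : IsRegularWith m D C) : m univ ≠ 0 := by
  have hC := h.pos
  obtain ⟨z⟩ := ‹Nonempty Z›
  refine ((ENNReal.ofReal_pos.2 ?_).trans_le
    ((h.le_measure_ball z 1 one_pos le_rfl).trans (measure_mono (subset_univ _)))).ne'
  positivity

theorem exists_isRegularWith_common {ι : Type*} [Finite ι] {Y X : ι → Type*}
    [∀ i, MetricSpace (Y i)] [∀ i, MetricSpace (X i)] [∀ i, MeasurableSpace (Y i)]
    [∀ i, MeasurableSpace (X i)] {ν : ∀ i, Measure (Y i)} {μ : ∀ i, Measure (X i)}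
    [∀ i, IsFiniteMeasure (ν i)] [∀ i, IsFiniteMeasure (μ i)] {δ : ι → ℝ} (hδ : ∀ i, 0 ≤ δ i)
    (hν : ∀ i, IsAhlfors (ν i) (δ i)) (hμ : ∀ i, IsAhlfors (μ i) (δ i)) :
    ∃ C > 0, (∀ i, IsRegularWith (ν i) (δ i) C) ∧ ∀ i, IsRegularWith (μ i) (δ i) C := by
  obtain ⟨C₁, h₁⟩ := exists_forall_isRegularWith fun i => (hν i).exists_isRegularWith (hδ i)
  obtain ⟨C₂, h₂⟩ := exists_forall_isRegularWith fun i => (hμ i).exists_isRegularWith (hδ i)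
  exact ⟨max 1 (max C₁ C₂), by positivity,
    fun i => (h₁ i).mono ((le_max_left _ _).trans (le_max_right _ _)),
    fun i => (h₂ i).mono ((le_max_right _ _).trans (le_max_right _ _))⟩

theorem eventually_diam2_box_lt {W : Fin d → Type*} [∀ i, MetricSpace (W i)]
    (x : ℕ → ∀ i, W i) {a : ℕ → Fin d → ℝ} (ha : ∀ i, Tendsto (fun n => a n i) atTop (nhds 0))
    {η : ℝ} (hη : 0 < η) : ∀ᶠ n in atTop, diam2 (box (x n) (a n)) < η := by
  obtain ⟨β, hβ, hβη⟩ : ∃ β > 0, d * (2 * β) < η :=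
    ⟨η / (2 * (d + 1)), by positivity, by field_simp; linarith⟩
  filter_upwards [eventually_all.2 fun i => (ha i).eventually_le_const hβ] with n hn
  exact (diam2_le_of_dist_le (by positivity) fun y hy z hz => dist_le_of_mem_closedBox hβ.le hn
    (box_subset_closedBox hy) (box_subset_closedBox hz)).trans_lt hβη

theorem tendsto_rpow_nhds_zero_of_tendsto {r u : ℕ → ℝ} {ulim : ℝ}
    (hr0 : Tendsto r atTop (nhds 0)) (hu : Tendsto u atTop (nhds ulim)) (hulim : 0 < ulim) :
    Tendsto (fun n => r n ^ u n) atTop (nhds 0) := by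
  simpa only [Real.zero_rpow hulim.ne'] using hr0.rpow hu (Or.inr hulim)

theorem rpow_rpow_mul_div_div {r u v δ : ℝ} (hr : 0 ≤ r) (hv : v ≠ 0) (hδ : δ ≠ 0) :
    (r ^ v) ^ (u * δ / v / δ) = r ^ u := by
  rw [← Real.rpow_mul hr]
  congr 1
  field_simp

theorem statement11_general (hd : 1 ≤ d) (Y X : Fin d → Type*)
    [∀ i, MetricSpace (Y i)] [∀ i, CompactSpace (Y i)]
    [∀ i, MeasurableSpace (Y i)] [∀ i, BorelSpace (Y i)]
    [∀ i, MetricSpace (X i)] [∀ i, CompactSpace (X i)]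
    [∀ i, MeasurableSpace (X i)] [∀ i, BorelSpace (X i)]
    (δ : Fin d → ℝ) (hδ : ∀ i, 0 ≤ δ i) (μ : ∀ i, Measure (X i)) (ν : ∀ i, Measure (Y i))
    (hμ : ∀ i, IsAhlfors (μ i) (δ i)) (hν : ∀ i, IsAhlfors (ν i) (δ i))
    (ξ : (i : Fin d) → ℕ → Y i)
    (r : ℕ → ℝ) (hrpos : ∀ n, 0 < r n) (hr0 : Tendsto r atTop (nhds 0))
    (v : Fin d → ℕ → ℝ) (vlim : Fin d → ℝ≥0∞) (hvlim : ∀ i, 0 < vlim i)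
    (hv : ∀ i, Tendsto (fun n => ENNReal.ofReal (v i n)) atTop (nhds (vlim i)))
    (u : Fin d → ℕ → ℝ) (huv : ∀ i n, u i n ≤ v i n)
    (ulim : Fin d → ℝ) (hulim : ∀ i, 0 < ulim i)
    (hu : ∀ i, Tendsto (u i) atTop (nhds (ulim i)))
    {L ε : ℝ} (f : ℕ → (∀ i, Y i) → (∀ i, X i)) (hf : ∀ n, IsLocallyBilipschitz (f n) L ε)
    (g : (∀ i, Y i) → (∀ i, X i)) (hg : IsLocallyBilipschitz g L ε)
    (c : ℕ → ℝ) (hc : ∀ n, 0 < c n)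
    (hclog : Tendsto (fun n => Real.log (c n) / (-Real.log (r n))) atTop (nhds 0))
    (hH : ∀ᶠ n in atTop, ∃ y, (f n '' box (fun i => ξ i n) fun i => r n ^ u i n) ⊆
      g '' box y fun i => c n * r n ^ u i n)
    (hfull : Measure.pi μ (atTop.limsup fun n => f n '' box (fun i => ξ i n) fun i => r n ^ u i n)
      = Measure.pi μ univ) :
    ENNReal.ofReal (dimNum δ ulim vlim) ≤
      dimH (atTop.limsup fun n => f n '' box (fun i => ξ i n) fun i => r n ^ v i n) := by
  have hYfin (i : Fin d) : IsFiniteMeasure (ν i) := (hν i).isFiniteMeasure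
  have hXfin (i : Fin d) : IsFiniteMeasure (μ i) := (hμ i).isFiniteMeasure
  have : Nonempty (∀ i, X i) := ⟨g fun i => ξ i 0⟩
  obtain ⟨C, hC, hνC, hμC⟩ := exists_isRegularWith_common hδ hν hμ
  have huvlim (k : Fin d) : ENNReal.ofReal (ulim k) ≤ vlim k :=
    le_of_tendsto_of_tendsto' (ENNReal.tendsto_ofReal (hu k)) (hv k) fun n =>
      ENNReal.ofReal_le_ofReal (huv k n)
  have hdim : dimNum δ ulim vlim ≤ ∑ i, δ i := dimNum_le_sum hd hδ hvlim huvlim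
  have hε := hg.pos
  refine ofReal_le_of_forall_pos_lt fun t ht hts => ?_
  obtain ⟨s, hts, hs⟩ := exists_between hts
  obtain ⟨A₀, hA₀, e, he, hA₀e, hes⟩ :=
    exists_margins hulim (sub_pos.2 hs) (ht.trans (hts.trans (hs.trans_le hdim)))
  refine ofReal_le_dimH_limsup_image_box (a := fun k => ulim k - e) hf
    (fun n => (hf n).isBoxRegular hC hνC hμC) hg (hg.isBoxRegular hC hνC hμC) (by positivity)
    (by linarith [min_le_right 1 (ε / 3)]) hδ (isRegularWith_pi hμC).isFrostman
    (isRegularWith_pi hμC).measure_univ_ne_zero (hs.le.trans hdim) hA₀ hr0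
    (eventually_isAdmissibleScale hd hδ hrpos hr0 hvlim hv huv hu huvlim L (by positivity) hA₀ he
      hA₀e hs.le hes) ?_ hfull ht hts
  filter_upwards [hH, eventually_mul_rpow_le_rpow_sub hrpos hr0 hu hc hclog he] with n ⟨y, hy⟩ hle
  exact ⟨y, hy.trans (image_mono (box_subset_closedBox.trans (closedBox_mono hle)))⟩

/-- (Mass Transference Principle under full measure; dimension form.) -/
theorem statement11 {d : ℕ} (hd : 1 ≤ d)
    (Y X : Fin d → Type*)
    [∀ i, MetricSpace (Y i)] [∀ i, CompactSpace (Y i)]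
    [∀ i, MeasurableSpace (Y i)] [∀ i, BorelSpace (Y i)]
    [∀ i, MetricSpace (X i)] [∀ i, CompactSpace (X i)]
    [∀ i, MeasurableSpace (X i)] [∀ i, BorelSpace (X i)]
    (δ : Fin d → ℝ) (hδ : ∀ i, 0 < δ i)
    (μ : ∀ i, Measure (X i)) [∀ i, SigmaFinite (μ i)]
    (ν : ∀ i, Measure (Y i))
    (hμ : ∀ i, IsAhlfors (μ i) (δ i)) (hν : ∀ i, IsAhlfors (ν i) (δ i))
    -- the balls B_{i,n} ⊆ Y_i, of radius rₙ^{v_{i,n}}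
    (ξ : (i : Fin d) → ℕ → Y i)
    (r : ℕ → ℝ) (hrpos : ∀ n, 0 < r n) (hr0 : Tendsto r atTop (nhds 0))
    (v : Fin d → ℕ → ℝ) (hvpos : ∀ i n, 0 < v i n)
    (vlim : Fin d → ℝ≥0∞) (hvlim : ∀ i, 0 < vlim i)
    (hv : ∀ i, Tendsto (fun n => ENNReal.ofReal (v i n)) atTop (nhds (vlim i)))
    (u : Fin d → ℕ → ℝ) (hupos : ∀ i n, 0 < u i n) (huv : ∀ i n, u i n ≤ v i n)
    (ulim : Fin d → ℝ) (hulim : ∀ i, 0 < ulim i)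
    (hu : ∀ i, Tendsto (u i) atTop (nhds (ulim i)))
    -- the local isometries, satisfying condition (H)
    (ε₀ : ℝ) (hε₀ : 0 < ε₀)
    (f : ℕ → (∀ i, Y i) → (∀ i, X i)) (hf : ∀ n, IsLocalIsometry (f n) ε₀)
    (hH : ∃ c : ℕ → ℝ, (∀ n, 1 ≤ c n) ∧
      Tendsto (fun n => Real.log (c n) / (-Real.log (r n))) atTop (nhds 0) ∧
      ∃ g : (∀ i, Y i) → (∀ i, X i), IsLocalIsometry g ε₀ ∧
        ∀ (n : ℕ) (yc : ∀ i, Y i) (rad : Fin d → ℝ),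
          diam2 (univ.pi fun i => Metric.ball (yc i) (rad i)) < ε₀ →
          ∃ yR : ∀ i, Y i,
            g '' (univ.pi fun i => Metric.ball (yR i) ((c n)⁻¹ * rad i)) ⊆
                f n '' (univ.pi fun i => Metric.ball (yc i) (rad i)) ∧
              f n '' (univ.pi fun i => Metric.ball (yc i) (rad i)) ⊆
                g '' (univ.pi fun i => Metric.ball (yR i) (c n * rad i)))
    -- full measure condition
    (hfull : Measure.pi μ
        (atTop.limsup fun n => f n ''
          univ.pi fun i => Metric.ball (ξ i n) ((r n ^ v i n) ^ (u i n * δ i / v i n / δ i)))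
      = Measure.pi μ univ) :
    ENNReal.ofReal (dimNum δ ulim vlim) ≤
      dimH (atTop.limsup fun n => f n ''
        univ.pi fun i => Metric.ball (ξ i n) (r n ^ v i n)) := by
  obtain ⟨c, hc, hclog, g, hg, hH⟩ := hH
  simp only [rpow_rpow_mul_div_div (hrpos _).le (hvpos _ _).ne' (hδ _).ne'] at hfull
  exact statement11_general hd Y X δ (fun i => (hδ i).le) μ ν hμ hν ξ r hrpos hr0 v vlim hvlim hv
    u huv ulim hulim hu f (fun n => (hf n).isLocallyBilipschitz hd hε₀) g
    (hg.isLocallyBilipschitz hd hε₀) c (fun n => one_pos.trans_le (hc n)) hclog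
    ((eventually_diam2_box_lt (fun n i => ξ i n)
      (fun i => tendsto_rpow_nhds_zero_of_tendsto hr0 (hu i) (hulim i)) hε₀).mono
        fun n hn => (hH n _ _ hn).imp fun _ => And.right) hfull
end
end

section
/- Fix d ≥ 1 and δ = (δ₁,...,δ_d) ∈ (ℝ⁺)^d. Suppose u, v ∈ (ℝ⁺)^d satisfy u_i ≤ v_i for every 1 ≤ i ≤ d, and let 𝒜 := {u_i, v_i : 1 ≤ i ≤ d}. Then min_{a∈𝒜} 𝔰(u,v,a) = min_{1≤i≤d} s(u,v,i). -/
open Filter Set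

noncomputable section

/-- The quantity `𝔰(u,v,a)`. -/
def sFrak {d : ℕ} (δ u v : Fin d → ℝ) (a : ℝ) : ℝ :=
  (∑ k ∈ Finset.univ.filter (fun k => a < u k), δ k)
    + (∑ k ∈ Finset.univ.filter (fun k => v k ≤ a), δ k * (1 - (v k - u k) / a))
    + ∑ k ∈ Finset.univ.filter (fun k => ¬(a < u k) ∧ ¬(v k ≤ a)), δ k * u k / a

/-!
The function `a ↦ a * 𝔰(u,v,a)` is piecewise linear, vanishes at `0`, and its slope increases only
at the points `v k`. Hence, for every constant `c`, `a ↦ a * 𝔰(u,v,a) - c * a` is concave between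
consecutive points of `{0} ∪ {v k}`. For `c = min_i 𝔰(u,v,v i)` it is nonnegative at these points,
therefore on all of `[0, max_i v i]`, which contains every `u j`.
-/

section Gaps

variable {𝕜 : Type*}

lemma exists_consecutive_of_mem_Icc [LinearOrder 𝕜] {S : Finset 𝕜} {s t a : 𝕜} (hs : s ∈ S)
    (ht : t ∈ S) (ha : a ∈ Icc s t) :
    ∃ p ∈ S, ∃ q ∈ S, a ∈ Icc p q ∧ ∀ x ∈ S, x ≤ p ∨ q ≤ x := by
  obtain ⟨p, hp, hp_max⟩ := (S.filter (· ≤ a)).exists_max_image id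
    ⟨s, Finset.mem_filter.mpr ⟨hs, ha.1⟩⟩
  obtain ⟨q, hq, hq_min⟩ := (S.filter (a ≤ ·)).exists_min_image id
    ⟨t, Finset.mem_filter.mpr ⟨ht, ha.2⟩⟩
  rw [Finset.mem_filter] at hp hq
  refine ⟨p, hp.1, q, hq.1, ⟨hp.2, hq.2⟩, fun x hx => ?_⟩
  exact (le_total x a).imp (fun h => hp_max x (Finset.mem_filter.mpr ⟨hx, h⟩))
    fun h => hq_min x (Finset.mem_filter.mpr ⟨hx, h⟩)

lemma le_of_concaveOn_between_consecutive {β : Type*} [Field 𝕜] [LinearOrder 𝕜]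
    [IsStrictOrderedRing 𝕜] [AddCommGroup β] [LinearOrder β] [IsOrderedAddMonoid β] [Module 𝕜 β]
    [IsStrictOrderedModule 𝕜 β] {f : 𝕜 → β} {S : Finset 𝕜} {s t a : 𝕜} {b : β}
    (hf : ∀ p ∈ S, ∀ q ∈ S, (∀ x ∈ S, x ≤ p ∨ q ≤ x) → ConcaveOn 𝕜 (Icc p q) f)
    (hb : ∀ x ∈ S, b ≤ f x) (hs : s ∈ S) (ht : t ∈ S) (ha : a ∈ Icc s t) : b ≤ f a := by
  obtain ⟨p, hp, q, hq, hapq, hgap⟩ := exists_consecutive_of_mem_Icc hs ht ha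
  have hpq : p ≤ q := hapq.1.trans hapq.2
  exact (le_min (hb p hp) (hb q hq)).trans <| (hf p hp q hq hgap).min_le_of_mem_Icc
    (left_mem_Icc.mpr hpq) (right_mem_Icc.mpr hpq) hapq

lemma concaveOn_max_zero_sub [Ring 𝕜] [LinearOrder 𝕜] [IsOrderedRing 𝕜] {p q b : 𝕜}
    (hb : b ≤ p ∨ q ≤ b) : ConcaveOn 𝕜 (Icc p q) fun x => max 0 (x - b) := by
  have hI : Convex 𝕜 (Icc p q) := convex_Icc p q
  rcases hb with hbp | hqb
  · refine ((concaveOn_id hI).sub (convexOn_const b hI)).congr fun x hx => ?_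
    exact (max_eq_right (sub_nonneg.mpr (hbp.trans hx.1))).symm
  · refine (concaveOn_const 0 hI).congr fun x hx => ?_
    exact (max_eq_left (sub_nonpos.mpr (hx.2.trans hqb))).symm

end Gaps

lemma concaveOn_finset_sum {κ 𝕜 E β : Type*} [Semiring 𝕜] [PartialOrder 𝕜] [AddCommMonoid E]
    [AddCommMonoid β] [PartialOrder β] [IsOrderedAddMonoid β] [Module 𝕜 E] [Module 𝕜 β]
    {s : Set E} (hs : Convex 𝕜 s) (t : Finset κ) {f : κ → E → β}
    (hf : ∀ k ∈ t, ConcaveOn 𝕜 s (f k)) : ConcaveOn 𝕜 s fun x => ∑ k ∈ t, f k x := by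
  rw [← Finset.sum_fn]
  exact Finset.sum_induction f (ConcaveOn 𝕜 s) (fun _ _ => ConcaveOn.add)
    (concaveOn_const 0 hs) hf

section ScaledSFrak

variable {ι : Type*} [Fintype ι]

/-- The function `a ↦ a * 𝔰(u,v,a)` for `u ≤ v`, in a closed form that also makes sense at `a = 0`.
For `0 ≤ u k ≤ v k` and `0 ≤ a`, the `k`-th summand is `δ k` times the length of
`[0, a] \ (u k, v k)`. -/
def scaledSFrak (δ u v : ι → ℝ) (a : ℝ) : ℝ :=
  ∑ k, δ k * (min a (u k) + max 0 (a - v k))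

lemma scaledSFrak_zero (δ : ι → ℝ) {u v : ι → ℝ} (hu : ∀ k, 0 ≤ u k) (hv : ∀ k, 0 ≤ v k) :
    scaledSFrak δ u v 0 = 0 := by
  simp [scaledSFrak, hu, hv]

lemma concaveOn_scaledSFrak {δ : ι → ℝ} (u : ι → ℝ) {v : ι → ℝ} (hδ : ∀ k, 0 ≤ δ k) {p q : ℝ}
    (hgap : ∀ k, v k ≤ p ∨ q ≤ v k) : ConcaveOn ℝ (Icc p q) (scaledSFrak δ u v) := by
  have hI : Convex ℝ (Icc p q) := convex_Icc p q
  refine concaveOn_finset_sum hI _ fun k _ => ConcaveOn.smul (hδ k) ?_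
  exact ((concaveOn_id hI).inf (concaveOn_const (u k) hI)).add (concaveOn_max_zero_sub (hgap k))

end ScaledSFrak

section SFrak

variable {d : ℕ} {δ u v : Fin d → ℝ}

lemma sFrak_eq_scaledSFrak_div (δ : Fin d → ℝ) (huv : ∀ k, u k ≤ v k) {a : ℝ} (ha : a ≠ 0) :
    sFrak δ u v a = scaledSFrak δ u v a / a := by
  simp only [sFrak, scaledSFrak, Finset.sum_filter, ← Finset.sum_add_distrib, Finset.sum_div]
  refine Finset.sum_congr rfl fun k _ => ?_
  rcases lt_or_ge a (u k) with hau | hua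
  · have hav : a < v k := hau.trans_le (huv k)
    simp [hau, hau.le, hav.le, hav.not_ge, ha]
  rcases le_or_gt (v k) a with hva | hav
  · simp only [hua.not_gt, hva, min_eq_right hua, max_eq_right (sub_nonneg.mpr hva), if_true,
      if_false, not_true, and_false]
    field_simp
    ring
  · simp [hua, hua.not_gt, hav.le, hav.not_ge]

lemma le_sFrak_iff_mul_le_scaledSFrak (δ : Fin d → ℝ) (huv : ∀ k, u k ≤ v k) {a : ℝ}
    (ha : 0 < a) (c : ℝ) : c ≤ sFrak δ u v a ↔ c * a ≤ scaledSFrak δ u v a := by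
  rw [sFrak_eq_scaledSFrak_div δ huv ha.ne', le_div_iff₀ ha]

lemma le_sFrak_of_forall_le_sFrak_v (hδ : ∀ k, 0 ≤ δ k) (hu : ∀ k, 0 ≤ u k) (huv : ∀ k, u k ≤ v k)
    {a c : ℝ} {j : Fin d} (ha : a ∈ Ioc 0 (v j)) (hc : ∀ i, c ≤ sFrak δ u v (v i)) :
    c ≤ sFrak δ u v a := by
  have hv (k : Fin d) : 0 ≤ v k := (hu k).trans (huv k)
  have hzero : 0 ≤ scaledSFrak δ u v 0 - c * 0 := by simp [scaledSFrak_zero δ hu hv]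
  have hbreak : ∀ x ∈ insert 0 (Finset.univ.image v), 0 ≤ scaledSFrak δ u v x - c * x := by
    simp only [Finset.forall_mem_insert, Finset.forall_mem_image]
    refine ⟨hzero, fun i _ => ?_⟩
    rcases (hv i).eq_or_lt with hvi | hvi
    · rwa [← hvi]
    · exact sub_nonneg.mpr ((le_sFrak_iff_mul_le_scaledSFrak δ huv hvi c).mp (hc i))
  rw [le_sFrak_iff_mul_le_scaledSFrak δ huv ha.1, ← sub_nonneg]
  refine le_of_concaveOn_between_consecutive (f := fun x => scaledSFrak δ u v x - c * x)
    (fun p _ q _ hgap => ?_) hbreak (Finset.mem_insert_self _ _)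
    (Finset.mem_insert_of_mem (Finset.mem_image_of_mem v (Finset.mem_univ j))) ⟨ha.1.le, ha.2⟩
  have hgap_v (k : Fin d) : v k ≤ p ∨ q ≤ v k :=
    hgap _ (Finset.mem_insert_of_mem (Finset.mem_image_of_mem v (Finset.mem_univ k)))
  exact (concaveOn_scaledSFrak u hδ hgap_v).sub
    ((LinearMap.mulLeft ℝ c).convexOn (convex_Icc p q))

end SFrak

/-- `min_{a ∈ 𝒜} 𝔰(u,v,a) = min_{1≤i≤d} s(u,v,i)`, where
`𝒜 = {uᵢ, vᵢ : 1 ≤ i ≤ d}` and `s(u,v,i) = 𝔰(u,v,vᵢ)`. -/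
theorem statement13 {d : ℕ} (hd : 1 ≤ d) (δ u v : Fin d → ℝ)
    (hδ : ∀ i, 0 < δ i) (hu : ∀ i, 0 < u i) (hv : ∀ i, 0 < v i)
    (huv : ∀ i, u i ≤ v i) :
    sInf (sFrak δ u v '' (range u ∪ range v)) = ⨅ i, sFrak δ u v (v i) := by
  have : Nonempty (Fin d) := ⟨⟨0, hd⟩⟩
  have hle_v : ∀ j, ⨅ i, sFrak δ u v (v i) ≤ sFrak δ u v (v j) :=
    ciInf_le (finite_range _).bddBelow
  have hle_u (j : Fin d) : ⨅ i, sFrak δ u v (v i) ≤ sFrak δ u v (u j) :=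
    le_sFrak_of_forall_le_sFrak_v (fun k => (hδ k).le) (fun k => (hu k).le) huv ⟨hu j, huv j⟩ hle_v
  refine IsGLB.csInf_eq ⟨?_, fun b hb => ?_⟩ ((range_nonempty u).inl.image _)
  · rintro _ ⟨_, ⟨j, rfl⟩ | ⟨j, rfl⟩, rfl⟩
    exacts [hle_u j, hle_v j]
  · exact le_ciInf fun i => hb ⟨v i, Or.inr ⟨i, rfl⟩, rfl⟩
end
end

section
/- Let β = (β₁,β₂) ∈ ℝ²∖ℚ² be a vector such that β₂/β₁ is an irrational quadratic algebraic number. Then there exist constants M₀ = M₀(β) > 0 and C = C(β) ∈ (0,1) such that for every M > M₀ and every z ∈ ℤ², one has dist_{ℝ²}(p, L) > M⁻¹ for every p ∈ ℤ²∖{z}, where L := {z + tβ : t ∈ ℝ, |t| ≤ CM} and dist_{ℝ²} is the Euclidean distance in ℝ². -/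
open Filter Set

noncomputable section

/-- Euclidean norm on `Fin d → ℝ`. -/
def euclNorm {d : ℕ} (x : Fin d → ℝ) : ℝ := Real.sqrt (∑ i, (x i) ^ 2)

/-!
By Liouville's inequality a quadratic irrational `α` is badly approximable: `|q| * |q * α - p|` is
bounded below over all integers `p` and `q ≠ 0`. If `α` is the slope of `β` and `v` is a nonzero
integer vector at distance `e ≤ 1` from `t • β`, then `v 0 * α - v 1` has size `O(e)` while `v 0`
has size `O(1 + |t|)`, so bad approximability forces `e ≥ c / (1 + |t|)` for some `c > 0`. For
`|t| ≤ C * M` with `C < c` and `M` large this exceeds `M⁻¹`.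
-/

/-- A real number is badly approximable if `|α - p / q| ≥ c / q ^ 2` for some `c > 0` and all
rationals `p / q`. The inequality is multiplied by `q ^ 2`, and `q` may be negative. -/
def IsBadlyApproximable (α : ℝ) : Prop :=
  ∃ c > 0, ∀ p q : ℤ, q ≠ 0 → c ≤ |(q : ℝ)| * |q * α - p|

theorem isBadlyApproximable_of_natDegree_eq_two {α : ℝ} (hα : Irrational α)
    {f : Polynomial ℤ} (hf : f.natDegree = 2) (hroot : Polynomial.aeval α f = 0) :
    IsBadlyApproximable α := by
  have hf0 : f ≠ 0 := by rintro rfl; simp at hf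
  obtain ⟨A, hA, hliouville⟩ := Liouville.exists_pos_real_of_irrational_root hα hf0
    (by rwa [Polynomial.eval_map_algebraMap])
  refine ⟨A⁻¹, inv_pos.mpr hA, fun p q hq => ?_⟩
  wlog hpos : 0 < q generalizing p q
  · have hneg := this (-p) (-q) (neg_ne_zero.mpr hq) (by omega)
    push_cast at hneg
    rwa [abs_neg, neg_mul, ← neg_sub', abs_neg] at hneg
  obtain ⟨b, rfl⟩ := Int.eq_succ_of_zero_lt hpos
  have hb : (0 : ℝ) < b + 1 := by positivity
  rw [inv_le_iff_one_le_mul₀ hA]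
  calc (1 : ℝ) ≤ (b + 1) ^ 2 * (|α - p / (b + 1)| * A) := hf ▸ hliouville p b
    _ = |(b + 1 : ℝ)| * |(b + 1) * α - p| * A := by
      rw [show (b + 1) * α - p = (b + 1) * (α - p / (b + 1)) by field_simp, abs_mul,
        abs_of_pos hb]
      ring
    _ = _ := by push_cast; rfl

namespace IsBadlyApproximable

theorem ne_zero {α : ℝ} (hα : IsBadlyApproximable α) : α ≠ 0 := by
  rintro rfl
  obtain ⟨c, hc, hbound⟩ := hα
  exact hc.not_ge (by simpa using hbound 0 1 one_ne_zero)

theorem exists_le_one_add_abs_mul {α : ℝ} (hα : IsBadlyApproximable α) :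
    ∃ c > 0, ∀ v : Fin 2 → ℤ, v ≠ 0 → c ≤ (1 + |(v 0 : ℝ)|) * |v 0 * α - v 1| := by
  obtain ⟨c, hc, hbound⟩ := hα
  refine ⟨min c 1, by positivity, fun v hv => ?_⟩
  by_cases h0 : v 0 = 0
  · have h1 : v 1 ≠ 0 := fun h1 => hv (funext (Fin.forall_fin_two.mpr ⟨h0, h1⟩))
    have hv1 : (1 : ℝ) ≤ |(v 1 : ℝ)| := by exact_mod_cast Int.one_le_abs h1
    simpa [h0] using Or.inr hv1
  · calc min c 1 ≤ c := min_le_left _ _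
      _ ≤ |(v 0 : ℝ)| * |v 0 * α - v 1| := hbound _ _ h0
      _ ≤ (1 + |(v 0 : ℝ)|) * |v 0 * α - v 1| := by gcongr; linarith

end IsBadlyApproximable

theorem norm_le_euclNorm {d : ℕ} (x : Fin d → ℝ) : ‖x‖ ≤ euclNorm x :=
  (pi_norm_le_iff_of_nonneg (Real.sqrt_nonneg _)).mpr fun i =>
    Real.abs_le_sqrt (Finset.single_le_sum (f := fun i => x i ^ 2)
      (fun j _ => sq_nonneg (x j)) (Finset.mem_univ i))

theorem abs_mul_slope_sub_le_norm_sub_smul (x : Fin 2 → ℝ) {β : Fin 2 → ℝ} (hβ : β 0 ≠ 0) (t : ℝ) :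
    |x 0 * (β 1 / β 0) - x 1| ≤ (1 + |β 1 / β 0|) * ‖x - t • β‖ := by
  have hcoord (i : Fin 2) : |x i - t * β i| ≤ ‖x - t • β‖ := norm_le_pi_norm (x - t • β) i
  calc |x 0 * (β 1 / β 0) - x 1|
      = |β 1 / β 0 * (x 0 - t * β 0) - (x 1 - t * β 1)| := by congr 1; field_simp; ring
    _ ≤ |β 1 / β 0| * |x 0 - t * β 0| + |x 1 - t * β 1| := by
      rw [← abs_mul]; exact abs_sub _ _
    _ ≤ |β 1 / β 0| * ‖x - t • β‖ + ‖x - t • β‖ := by gcongr <;> exact hcoord _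
    _ = (1 + |β 1 / β 0|) * ‖x - t • β‖ := by ring

theorem IsBadlyApproximable.exists_le_one_add_abs_mul_norm_sub_smul {β : Fin 2 → ℝ}
    (hβ : IsBadlyApproximable (β 1 / β 0)) :
    ∃ c > 0, ∀ v : Fin 2 → ℤ, v ≠ 0 → ∀ t : ℝ,
      c ≤ (1 + |t|) * ‖(fun i => (v i : ℝ)) - t • β‖ := by
  have hβ0 : β 0 ≠ 0 := (div_ne_zero_iff.mp hβ.ne_zero).2
  obtain ⟨c, hc, hbound⟩ := hβ.exists_le_one_add_abs_mul
  set A := 1 + |β 1 / β 0|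
  set B := 2 + |β 0|
  refine ⟨min 1 (c / (A * B)), by positivity, fun v hv t => ?_⟩
  set e := ‖(fun i => (v i : ℝ)) - t • β‖
  rcases le_total 1 e with he | he
  · exact (min_le_left _ _).trans
      (one_le_mul_of_one_le_of_one_le (le_add_of_nonneg_right (abs_nonneg t)) he)
  have hv0 : 1 + |(v 0 : ℝ)| ≤ B * (1 + |t|) := by
    have hdist : |v 0 - t * β 0| ≤ e := norm_le_pi_norm ((fun i => (v i : ℝ)) - t • β) 0
    have htri : |(v 0 : ℝ)| ≤ |t| * |β 0| + |v 0 - t * β 0| := by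
      simpa only [abs_mul, add_sub_cancel] using abs_add_le (t * β 0) (v 0 - t * β 0)
    calc 1 + |(v 0 : ℝ)| ≤ 2 + |β 0| * |t| := by linarith
      _ ≤ 2 + |β 0| * |t| + (|β 0| + 2 * |t|) := le_add_of_nonneg_right (by positivity)
      _ = (2 + |β 0|) * (1 + |t|) := by ring
  refine (min_le_right _ _).trans ((div_le_iff₀ (by positivity)).mpr ?_)
  calc c ≤ (1 + |(v 0 : ℝ)|) * |v 0 * (β 1 / β 0) - v 1| := hbound v hv
    _ ≤ B * (1 + |t|) * (A * e) := by
      gcongr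
      exact abs_mul_slope_sub_le_norm_sub_smul (fun i => (v i : ℝ)) hβ0 t
    _ = (1 + |t|) * e * (A * B) := by ring

theorem inv_lt_div_one_add_mul {c C M : ℝ} (hc : 0 < c) (hC : 0 ≤ C) (hCc : C ≤ c / 2)
    (hM : 2 / c < M) : M⁻¹ < c / (1 + C * M) := by
  have hM0 : 0 < M := (div_pos two_pos hc).trans hM
  have hcM : 2 < M * c := (div_lt_iff₀ hc).mp hM
  have hCM : C * M ≤ c / 2 * M := by gcongr
  rw [lt_div_iff₀ (add_pos_of_pos_of_nonneg one_pos (mul_nonneg hC hM0.le)), inv_mul_lt_iff₀ hM0]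
  linarith

theorem statement18_general (β : Fin 2 → ℝ) (hβ : IsBadlyApproximable (β 1 / β 0)) :
    ∃ M₀ > (0:ℝ), ∃ C ∈ Ioo (0:ℝ) 1, ∀ M > M₀, ∀ z : Fin 2 → ℤ, ∀ p : Fin 2 → ℤ, p ≠ z →
      M⁻¹ < sInf {dd : ℝ | ∃ t : ℝ, |t| ≤ C * M ∧
        dd = euclNorm (fun i => (p i : ℝ) - ((z i : ℝ) + t * β i))} := by
  obtain ⟨c, hc, hbound⟩ := hβ.exists_le_one_add_abs_mul_norm_sub_smul
  obtain ⟨C, hC, hCmin⟩ : ∃ C > 0, C ≤ min c 1 / 2 := ⟨_, by positivity, le_rfl⟩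
  have hCc : C ≤ c / 2 := by linarith [min_le_left c 1]
  have hC1 : C < 1 := by linarith [min_le_right c 1]
  refine ⟨2 / c, by positivity, C, ⟨hC, hC1⟩, fun M hM z p hpz => ?_⟩
  have hCM : 0 < C * M := mul_pos hC ((div_pos two_pos hc).trans hM)
  refine (inv_lt_div_one_add_mul hc hC.le hCc hM).trans_le
    (le_csInf ⟨_, 0, abs_zero.trans_le hCM.le, rfl⟩ ?_)
  rintro _ ⟨t, ht, rfl⟩
  rw [div_le_iff₀' (add_pos one_pos hCM)]
  calc c ≤ (1 + |t|) * ‖(fun i => ((p - z) i : ℝ)) - t • β‖ :=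
        hbound (p - z) (sub_ne_zero.mpr hpz) t
    _ ≤ (1 + C * M) * euclNorm ((fun i => ((p - z) i : ℝ)) - t • β) := by
      gcongr; exact norm_le_euclNorm _
    _ = (1 + C * M) * euclNorm (fun i => (p i : ℝ) - ((z i : ℝ) + t * β i)) := by
      congr 2; ext i; simp [sub_sub]

/-- If `β₂/β₁` is an irrational quadratic algebraic number, then integer
points other than `z` stay at distance `> M⁻¹` from the segment
`L = {z + tβ : |t| ≤ CM}`. -/
theorem statement18 (β : Fin 2 → ℝ)
    (hβ : ¬ ∀ i, ∃ q : ℚ, β i = (q : ℝ))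
    (hirr : Irrational (β 1 / β 0))
    (hquad : ∃ p : Polynomial ℤ, p.degree = 2 ∧ Polynomial.aeval (β 1 / β 0) p = 0) :
    ∃ M₀ > (0:ℝ), ∃ C ∈ Ioo (0:ℝ) 1, ∀ M > M₀, ∀ z : Fin 2 → ℤ, ∀ p : Fin 2 → ℤ, p ≠ z →
      M⁻¹ < sInf {dd : ℝ | ∃ t : ℝ, |t| ≤ C * M ∧
        dd = euclNorm (fun i => (p i : ℝ) - ((z i : ℝ) + t * β i))} := by
  obtain ⟨f, hdeg, hroot⟩ := hquad
  exact statement18_general β (isBadlyApproximable_of_natDegree_eq_two hirr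
    (Polynomial.natDegree_eq_of_degree_eq_some hdeg) hroot)
end
end
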